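/- arXiv:2206.04842 — 2 statements merged into one kernel-verified Lean document; each statement's English description precedes it below -/
import Mathlib

section
/- For all integers n ≥ 1 and all integers d such that d ∈ {1, 2, 91, 92, 93} or d ≥ 187, one has q_d^{(3)}(n) ≥ Q_d^{(3,-)}(n). -/
/-- `q_d^{(a)}(n)`: the number of partitions of `n` into parts of size at least `a`
such that successive parts differ by at least `d`. -/
noncomputable def gapCount (d a n : ℕ) : ℕ :=
  Nat.card {p : n.Partition //
    (∀ x ∈ p.parts, a ≤ x) ∧
    List.Chain' (fun x y => x + d ≤ y) (p.parts.sort (· ≤ ·))}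

/-- `Q_d^{(a)}(n)`: the number of partitions of `n` into parts congruent to `a` or `-a`
modulo `d + 3`. -/
noncomputable def congCount (d a n : ℕ) : ℕ :=
  Nat.card {p : n.Partition //
    ∀ x ∈ p.parts, x ≡ a [MOD d + 3] ∨ x + a ≡ 0 [MOD d + 3]}

/-- `Q_d^{(a,-)}(n)`: as `congCount`, but no part equals `d + 3 - a`. -/
noncomputable def congMinusCount (d a n : ℕ) : ℕ :=
  Nat.card {p : n.Partition //
    (∀ x ∈ p.parts, x ≡ a [MOD d + 3] ∨ x + a ≡ 0 [MOD d + 3]) ∧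
    ∀ x ∈ p.parts, x ≠ d + 3 - a}

/-- `Q_d^{(a,-,-)}(n)`: as `congCount`, but no part equals `a` or `d + 3 - a`. -/
noncomputable def congMinusMinusCount (d a n : ℕ) : ℕ :=
  Nat.card {p : n.Partition //
    (∀ x ∈ p.parts, x ≡ a [MOD d + 3] ∨ x + a ≡ 0 [MOD d + 3]) ∧
    (∀ x ∈ p.parts, x ≠ a) ∧ ∀ x ∈ p.parts, x ≠ d + 3 - a}

/-- `ρ(R; n)`: the number of partitions of `n` all of whose parts lie in `R`. -/
noncomputable def rhoCount (R : Set ℕ) (n : ℕ) : ℕ :=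
  Nat.card {p : n.Partition // ∀ x ∈ p.parts, x ∈ R}

/-- `h_n^{(a)}`: the least nonnegative residue of `-n` modulo `a`,
so that `n + negRes n a = a * ⌈n/a⌉`. -/
def negRes (n a : ℕ) : ℕ := (a - n % a) % a

/-- `⌈d/a⌉` for natural numbers. -/
def cdiv (d a : ℕ) : ℕ := (d + a - 1) / a

set_option linter.deprecated false

/-! ### Splitting off one part -/

theorem rhoCount_mono {R S : Set ℕ} (h : R ⊆ S) (n : ℕ) : rhoCount R n ≤ rhoCount S n :=
  Nat.card_le_card_of_injective
    (fun p : {p : n.Partition // ∀ x ∈ p.parts, x ∈ R} =>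
      (⟨p.1, fun x hx => h (p.2 x hx)⟩ : {p : n.Partition // ∀ x ∈ p.parts, x ∈ S}))
    fun _ _ hpq => Subtype.ext (Subtype.mk.inj hpq)

theorem rhoCount_congr {R S : Set ℕ} {n : ℕ} (h : ∀ x, 0 < x → x ≤ n → (x ∈ R ↔ x ∈ S)) :
    rhoCount R n = rhoCount S n := by
  refine Nat.card_congr (Equiv.subtypeEquivRight fun p => ?_)
  exact forall₂_congr fun x hx => h x (p.parts_pos hx) (Nat.Partition.le_of_mem_parts hx)

/-- Partitions satisfying `P` and containing `b` correspond to partitions of `n - b`. -/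
theorem card_partition_split {n b : ℕ} (hb : 1 ≤ b) (hbn : b ≤ n) (P : n.Partition → Prop)
    (Q : (n - b).Partition → Prop)
    (hPQ : ∀ p : {p : n.Partition // b ∈ p.parts},
      P p.1 ↔ Q (Nat.Partition.partitionWithPartEquiv hb hbn p)) :
    Nat.card {p : n.Partition // P p} =
      Nat.card {p : n.Partition // P p ∧ b ∉ p.parts} + Nat.card {p : (n - b).Partition // Q p} := by
  classical
  have e : {p : {p : n.Partition // b ∈ p.parts} // P p.1} ≃ {p : (n - b).Partition // Q p} :=
    Equiv.subtypeEquiv (Nat.Partition.partitionWithPartEquiv hb hbn) hPQ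
  have e₂ : {p : {p : n.Partition // b ∈ p.parts} // P p.1} ≃ {p : n.Partition // P p ∧ b ∈ p.parts} :=
    (Equiv.subtypeSubtypeEquivSubtypeInter _ _).trans (Equiv.subtypeEquivRight fun p => and_comm)
  rw [← Nat.card_congr e, Nat.card_congr e₂, Nat.subtype_card (Finset.univ.filter P) (by simp),
    Nat.subtype_card ((Finset.univ.filter P).filter (b ∉ ·.parts)) (by simp),
    Nat.subtype_card ((Finset.univ.filter P).filter (b ∈ ·.parts)) (by simp), add_comm]
  exact (Finset.card_filter_add_card_filter_not _).symm

theorem rhoCount_eq_diff_add {S : Set ℕ} {b n : ℕ} (hbS : b ∈ S) (hb : 1 ≤ b) (hbn : b ≤ n) :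
    rhoCount S n = rhoCount (S \ {b}) n + rhoCount S (n - b) := by
  unfold rhoCount
  rw [card_partition_split hb hbn _ fun p : (n - b).Partition => ∀ x ∈ p.parts, x ∈ S]
  · congr 1
    refine Nat.card_congr (Equiv.subtypeEquivRight fun p => ?_)
    constructor
    · rintro ⟨h, h'⟩ x hx
      exact ⟨h x hx, fun hxb => h' (Set.mem_singleton_iff.1 hxb ▸ hx)⟩
    · intro h
      exact ⟨fun x hx => (h x hx).1, fun hx => (h b hx).2 rfl⟩
  · rintro ⟨p, hp⟩
    simp only [Nat.Partition.partitionWithPartEquiv_apply_parts]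
    constructor
    · exact fun h x hx => h x (Multiset.mem_of_mem_erase hx)
    · intro h x hx
      by_cases hxb : x = b
      · exact hxb ▸ hbS
      · exact h x ((Multiset.mem_erase_of_ne hxb).2 hx)

theorem rhoCount_insert_le {S : Set ℕ} {b n : ℕ} (hb : 1 ≤ b) :
    rhoCount (insert b S) n ≤
      rhoCount S n + if b ≤ n then rhoCount (insert b S) (n - b) else 0 := by
  have hsub : insert b S \ {b} ⊆ S := by simp
  split_ifs with hbn
  · rw [rhoCount_eq_diff_add (Set.mem_insert b S) hb hbn]
    exact Nat.add_le_add_right (rhoCount_mono hsub n) _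
  · refine le_of_eq (rhoCount_congr fun x _ hxn => ?_)
    have : x ≠ b := by omega
    simp [this]

theorem isChain_gap_iff_pairwise {d : ℕ} {l : List ℕ} :
    List.Chain' (fun x y => x + d ≤ y) l ↔ l.Pairwise fun x y => x + d ≤ y := by
  have : IsTrans ℕ fun x y => x + d ≤ y := ⟨fun x y z h₁ h₂ => by omega⟩
  exact List.isChain_iff_pairwise

theorem gapCount_pred_iff {d a : ℕ} {s : Multiset ℕ} (ha : a ∈ s) :
    ((∀ x ∈ s, a ≤ x) ∧ List.Chain' (fun x y => x + d ≤ y) (s.sort (· ≤ ·))) ↔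
      ((∀ x ∈ s.erase a, a + d ≤ x) ∧
        List.Chain' (fun x y => x + d ≤ y) ((s.erase a).sort (· ≤ ·))) := by
  obtain ⟨t, rfl⟩ := Multiset.exists_cons_of_mem ha
  rw [Multiset.erase_cons_head]
  simp only [isChain_gap_iff_pairwise, Multiset.mem_cons, forall_eq_or_imp, le_refl, true_and]
  constructor
  · rintro ⟨h₁, h₂⟩
    rw [Multiset.sort_cons a t (· ≤ ·) h₁, List.pairwise_cons] at h₂
    simpa using h₂
  · rintro ⟨h₁, h₂⟩
    have h₃ : ∀ x ∈ t, a ≤ x := fun x hx => le_trans (Nat.le_add_right a d) (h₁ x hx)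
    refine ⟨h₃, ?_⟩
    rw [Multiset.sort_cons a t (· ≤ ·) h₃, List.pairwise_cons]
    simpa using ⟨h₁, h₂⟩

theorem gapCount_succ_of_lt {d a n : ℕ} (h : n < a) : gapCount d a n = gapCount d (a + 1) n := by
  refine Nat.card_congr (Equiv.subtypeEquivRight fun p => and_congr_left fun _ => ?_)
  refine forall₂_congr fun x hx => ?_
  have := Nat.Partition.le_of_mem_parts hx
  omega

theorem gapCount_eq_add {d a n : ℕ} (ha : 1 ≤ a) (hn : a ≤ n) :
    gapCount d a n = gapCount d (a + 1) n + gapCount d (a + d) (n - a) := by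
  unfold gapCount
  rw [card_partition_split ha hn _ fun p : (n - a).Partition => (∀ x ∈ p.parts, a + d ≤ x) ∧
    List.Chain' (fun x y => x + d ≤ y) (p.parts.sort (· ≤ ·))]
  · congr 1
    refine Nat.card_congr (Equiv.subtypeEquivRight fun p => ?_)
    constructor
    · rintro ⟨⟨h₁, h₂⟩, h₃⟩
      exact ⟨fun x hx => lt_of_le_of_ne (h₁ x hx) fun h => h₃ (h ▸ hx), h₂⟩
    · rintro ⟨h₁, h₂⟩
      exact ⟨⟨fun x hx => Nat.le_of_succ_le (h₁ x hx), h₂⟩, fun h => absurd (h₁ a h) (by omega)⟩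
  · rintro ⟨p, hp⟩
    simp only [Nat.Partition.partitionWithPartEquiv_apply_parts]
    exact gapCount_pred_iff hp

theorem gapCount_antitone (d n : ℕ) : Antitone fun a => gapCount d a n := by
  intro a b hab
  exact Nat.card_le_card_of_injective
    (fun p : {p : n.Partition // (∀ x ∈ p.parts, b ≤ x) ∧
        List.Chain' (fun x y => x + d ≤ y) (p.parts.sort (· ≤ ·))} =>
      (⟨p.1, fun x hx => hab.trans (p.2.1 x hx), p.2.2⟩ : {p : n.Partition //
        (∀ x ∈ p.parts, a ≤ x) ∧ List.Chain' (fun x y => x + d ≤ y) (p.parts.sort (· ≤ ·))}))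
    fun _ _ hpq => Subtype.ext (Subtype.mk.inj hpq)

theorem gapCount_pos {d a n : ℕ} (hn : n ≠ 0) (han : a ≤ n) : 1 ≤ gapCount d a n := by
  have : Nonempty {p : n.Partition // (∀ x ∈ p.parts, a ≤ x) ∧
      List.Chain' (fun x y => x + d ≤ y) (p.parts.sort (· ≤ ·))} :=
    ⟨Nat.Partition.indiscrete n, by simp [Nat.Partition.indiscrete_parts hn, han],
      by simp [isChain_gap_iff_pairwise, Nat.Partition.indiscrete_parts hn]⟩
  exact Nat.card_pos

theorem gapCount_zero (d a : ℕ) : gapCount d a 0 = 1 := by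
  unfold gapCount
  rw [Nat.card_eq_one_iff_unique]
  exact ⟨inferInstance, ⟨default, by simp, by simp [isChain_gap_iff_pairwise]⟩⟩

theorem gapCount_eq_zero {d a n : ℕ} (hn : n ≠ 0) (han : n < a) : gapCount d a n = 0 := by
  unfold gapCount
  rw [Nat.card_eq_zero]
  refine Or.inl ⟨fun ⟨p, hp, _⟩ => ?_⟩
  have : p.parts = 0 := Multiset.eq_zero_of_forall_notMem fun x hx => by
    have := hp x hx
    have := Nat.Partition.le_of_mem_parts hx
    omega
  have h := p.parts_sum
  rw [this] at h
  exact hn h.symm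

theorem congMinusCount_eq_rhoCount (d a n : ℕ) : congMinusCount d a n =
    rhoCount {x | (x ≡ a [MOD d + 3] ∨ x + a ≡ 0 [MOD d + 3]) ∧ x ≠ d + 3 - a} n :=
  Nat.card_congr (Equiv.subtypeEquivRight fun _ => forall₂_and.symm)

theorem rhoCount_zero (S : Set ℕ) : rhoCount S 0 = 1 := by
  unfold rhoCount
  rw [Nat.card_eq_one_iff_unique]
  exact ⟨inferInstance, ⟨default, by simp⟩⟩

/-! ### Generating functions -/

open PowerSeries in
/-- The generating function of `rhoCount S`. -/
noncomputable def rhoSeries (S : Set ℕ) : ℤ⟦X⟧ := PowerSeries.mk fun n => (rhoCount S n : ℤ)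

open PowerSeries in
/-- The generating function of `gapCount d a`. -/
noncomputable def gapSeries (d a : ℕ) : ℤ⟦X⟧ := PowerSeries.mk fun n => (gapCount d a n : ℤ)

section GeneratingFunctions

open PowerSeries

theorem one_sub_X_pow_mul_rhoSeries {S : Set ℕ} {b : ℕ} (hbS : b ∈ S) (hb : 1 ≤ b) :
    (1 - X ^ b) * rhoSeries S = rhoSeries (S \ {b}) := by
  ext n
  rw [sub_mul, one_mul, map_sub, coeff_X_pow_mul']
  simp only [rhoSeries, coeff_mk]
  split_ifs with hbn
  · rw [rhoCount_eq_diff_add hbS hb hbn]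
    push_cast
    ring
  · rw [sub_zero, Nat.cast_inj]
    refine rhoCount_congr fun x _ hxn => ?_
    have : x ≠ b := by omega
    simp [this]

theorem gapSeries_eq_add {d a : ℕ} (ha : 1 ≤ a) :
    gapSeries d a = gapSeries d (a + 1) + X ^ a * gapSeries d (a + d) := by
  ext n
  rw [map_add, coeff_X_pow_mul']
  simp only [gapSeries, coeff_mk]
  split_ifs with han
  · rw [gapCount_eq_add ha han]
    push_cast
    ring
  · rw [add_zero, gapCount_succ_of_lt (by omega)]

theorem X_pow_dvd_gapSeries_sub_one (d a : ℕ) : X ^ a ∣ gapSeries d a - 1 := by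
  rw [X_pow_dvd_iff]
  intro m hm
  simp only [gapSeries, map_sub, coeff_mk, coeff_one]
  split_ifs with h0
  · simp [h0, gapCount_zero]
  · simp [gapCount_eq_zero h0 hm]

theorem rhoCount_eq_zero {S : Set ℕ} {n : ℕ} (hn : n ≠ 0) (h : ∀ x ∈ S, n < x) :
    rhoCount S n = 0 := by
  unfold rhoCount
  rw [Nat.card_eq_zero]
  refine Or.inl ⟨fun ⟨p, hp⟩ => ?_⟩
  have hp0 : p.parts = 0 := Multiset.eq_zero_of_forall_notMem fun x hx =>
    absurd (h x (hp x hx)) (Nat.Partition.le_of_mem_parts hx).not_gt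
  have hs := p.parts_sum
  rw [hp0] at hs
  exact hn hs.symm

theorem X_pow_dvd_rhoSeries_sub_one {S : Set ℕ} {n : ℕ} (h : ∀ x ∈ S, n ≤ x) :
    X ^ n ∣ rhoSeries S - 1 := by
  rw [X_pow_dvd_iff]
  intro m hm
  simp only [rhoSeries, map_sub, coeff_mk, coeff_one]
  split_ifs with h0
  · simp [h0, rhoCount_zero]
  · simp [rhoCount_eq_zero h0 fun x hx => hm.trans_le (h x hx)]

/-! ### Gap one: Euler's theorem -/

theorem rhoCount_not_even (n : ℕ) : rhoCount {x | ¬ Even x} n = (Nat.Partition.odds n).card := by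
  unfold rhoCount
  exact Nat.subtype_card _ (by simp [Nat.Partition.odds, Nat.Partition.restricted])

theorem gapCount_one_one (n : ℕ) : gapCount 1 1 n = (Nat.Partition.distincts n).card := by
  unfold gapCount
  refine Nat.subtype_card _ fun p => ?_
  simp only [Nat.Partition.distincts, Finset.mem_filter, Finset.mem_univ, true_and,
    isChain_gap_iff_pairwise]
  constructor
  · intro h
    refine ⟨fun x hx => p.parts_pos hx, ?_⟩
    have hnd : (p.parts.sort (· ≤ ·)).Nodup := by
      rw [← Multiset.coe_nodup, Multiset.sort_eq]
      exact h
    exact ((Multiset.pairwise_sort p.parts (· ≤ ·)).and hnd).imp fun h => lt_of_le_of_ne h.1 h.2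
  · rintro ⟨_, h⟩
    rw [← Multiset.sort_eq p.parts (· ≤ ·), Multiset.coe_nodup]
    exact h.imp fun h => ne_of_lt h

theorem congMinusCount_le_gapCount_one (n : ℕ) : congMinusCount 1 3 n ≤ gapCount 1 3 n := by
  have euler : rhoSeries {x | ¬ Even x} = gapSeries 1 1 := by
    ext m
    simp only [rhoSeries, gapSeries, coeff_mk, rhoCount_not_even, gapCount_one_one,
      Nat.Partition.card_odds_eq_card_distincts]
  have hset : {x | (x ≡ 3 [MOD 1 + 3] ∨ x + 3 ≡ 0 [MOD 1 + 3]) ∧ x ≠ 1 + 3 - 3} =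
      {x : ℕ | ¬ Even x} \ {1} := by
    ext x
    simp only [Nat.ModEq, Set.mem_setOf_eq, Set.mem_diff, Set.mem_singleton_iff, Nat.even_iff]
    omega
  have key : rhoSeries ({x : ℕ | ¬ Even x} \ {1}) = (1 - X ^ 4) * gapSeries 1 3 := by
    rw [← one_sub_X_pow_mul_rhoSeries (by simp) le_rfl, euler,
      gapSeries_eq_add (d := 1) (a := 1) le_rfl, gapSeries_eq_add (d := 1) (a := 2) (by norm_num)]
    ring
  have hc := congrArg (coeff n) key
  rw [sub_mul, one_mul, map_sub, coeff_X_pow_mul'] at hc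
  simp only [rhoSeries, gapSeries, coeff_mk] at hc
  rw [congMinusCount_eq_rhoCount, hset]
  split_ifs at hc <;> omega

end GeneratingFunctions

/-! ### The Jacobi triple product modulo powers of `X` -/

section QSeries

variable {R : Type*} [CommRing R]

/-- The Gaussian binomial coefficient with base `y`. -/
def qBinom (y : R) : ℕ → ℕ → R
  | _, 0 => 1
  | 0, _ + 1 => 0
  | m + 1, k + 1 => qBinom y m (k + 1) + y ^ (m - k) * qBinom y m k

/-- The `q`-Pochhammer symbol `(y; y)_n`. -/
def qPoch (y : R) (n : ℕ) : R := ∏ i ∈ Finset.range n, (1 - y ^ (i + 1))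

theorem qPoch_succ (y : R) (n : ℕ) : qPoch y (n + 1) = qPoch y n * (1 - y ^ (n + 1)) :=
  Finset.prod_range_succ _ _

theorem qBinom_zero_right (y : R) (m : ℕ) : qBinom y m 0 = 1 := by
  cases m <;> rfl

theorem qBinom_eq_zero_of_lt (y : R) {m k : ℕ} (h : m < k) : qBinom y m k = 0 := by
  induction m generalizing k with
  | zero => obtain ⟨k, rfl⟩ := Nat.exists_eq_succ_of_ne_zero h.ne'; rfl
  | succ m ih =>
    obtain ⟨k, rfl⟩ := Nat.exists_eq_succ_of_ne_zero (Nat.ne_zero_of_lt h)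
    simp [qBinom, ih (show m < k by omega), ih (show m < k + 1 by omega)]

theorem qBinom_self (y : R) (m : ℕ) : qBinom y m m = 1 := by
  induction m with
  | zero => rfl
  | succ m ih => simp [qBinom, ih, qBinom_eq_zero_of_lt y (Nat.lt_succ_self m)]

theorem qBinom_mul_qPoch (y : R) (k l : ℕ) :
    qBinom y (k + l) k * (qPoch y k * qPoch y l) = qPoch y (k + l) := by
  induction h : k + l generalizing k l with
  | zero =>
    obtain ⟨rfl, rfl⟩ : k = 0 ∧ l = 0 := by omega
    simp [qBinom, qPoch]
  | succ m ih =>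
    rcases k with _ | k
    · obtain rfl : l = m + 1 := by omega
      simp [qBinom, qPoch]
    rcases l with _ | l
    · obtain rfl : k = m := by omega
      rw [qBinom_self]
      simp [qPoch]
    have h₁ := ih (k + 1) l (by omega)
    have h₂ := ih k (l + 1) (by omega)
    obtain rfl : m = k + (l + 1) := by omega
    rw [qBinom, qPoch_succ y (k + (l + 1)), Nat.add_sub_cancel_left]
    rw [qPoch_succ y k, qPoch_succ y l] at *
    linear_combination (1 - y ^ (l + 1)) * h₁ + y ^ (l + 1) * (1 - y ^ (k + 1)) * h₂

/-- The homogeneous `q`-binomial theorem. -/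
theorem prod_add_mul_pow_eq_sum_qBinom (y s t : R) (m : ℕ) :
    ∏ i ∈ Finset.range m, (s + t * y ^ i) =
      ∑ k ∈ Finset.range (m + 1), y ^ k.choose 2 * qBinom y m k * t ^ k * s ^ (m - k) := by
  induction m with
  | zero => simp [qBinom]
  | succ m ih =>
    have h₁ : s * ∑ k ∈ Finset.range (m + 1), y ^ k.choose 2 * qBinom y m k * t ^ k * s ^ (m - k) =
        ∑ k ∈ Finset.range (m + 2), y ^ k.choose 2 * qBinom y m k * t ^ k * s ^ (m + 1 - k) := by
      rw [Finset.sum_range_succ _ (m + 1), qBinom_eq_zero_of_lt y (Nat.lt_succ_self m),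
        Finset.mul_sum]
      simp only [mul_zero, zero_mul, add_zero]
      refine Finset.sum_congr rfl fun k hk => ?_
      rw [Nat.succ_sub (by simpa [Nat.lt_succ_iff] using hk), pow_succ]
      ring
    rw [Finset.prod_range_succ, ih, mul_add, mul_comm _ s, h₁, Finset.sum_range_succ' _ (m + 1),
      Finset.sum_range_succ' _ (m + 1), Finset.sum_mul, add_right_comm, ← Finset.sum_add_distrib]
    simp only [qBinom_zero_right]
    congr 1
    refine Finset.sum_congr rfl fun k hk => ?_
    have hk' : k ≤ m := by simpa [Nat.lt_succ_iff] using hk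
    obtain ⟨l, rfl⟩ := Nat.exists_eq_add_of_le hk'
    rw [show k + l + 1 - (k + 1) = l by omega, qBinom, Nat.add_sub_cancel_left, Nat.choose_succ_succ' k 1,
      Nat.choose_one_right]
    ring

end QSeries

section TripleProduct

open PowerSeries

theorem isUnit_one_sub_X_pow {a : ℕ} (ha : a ≠ 0) : IsUnit (1 - X ^ a : ℤ⟦X⟧) := by
  rw [isUnit_iff_constantCoeff]
  simp [ha]

theorem isUnit_qPoch {c : ℕ} (hc : c ≠ 0) (n : ℕ) : IsUnit (qPoch (X ^ c : ℤ⟦X⟧) n) := by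
  rw [qPoch, IsUnit.prod_iff]
  intro i _
  rw [← pow_mul]
  exact isUnit_one_sub_X_pow (by positivity)

theorem pow_dvd_qPoch_sub {R : Type*} [CommRing R] (y : R) {m n : ℕ} (h : m ≤ n) :
    y ^ (m + 1) ∣ qPoch y n - qPoch y m := by
  induction n, h using Nat.le_induction with
  | base => simp
  | succ n hn ih =>
    rw [qPoch_succ, show qPoch y n * (1 - y ^ (n + 1)) - qPoch y m =
      (qPoch y n - qPoch y m) - qPoch y n * y ^ (n + 1) by ring]
    exact dvd_sub ih (Dvd.dvd.mul_left (pow_dvd_pow y (by omega)) _)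

theorem pow_dvd_qPoch_mul_qBinom_sub_one {c n k l : ℕ} (hc : c ≠ 0) (hk : k ≤ l)
    (hkl : k + l = 2 * n) :
    ((X ^ c : ℤ⟦X⟧) ^ (k + 1) ∣ qPoch (X ^ c : ℤ⟦X⟧) n * qBinom (X ^ c) (2 * n) k - 1) ∧
    ((X ^ c : ℤ⟦X⟧) ^ (k + 1) ∣ qPoch (X ^ c : ℤ⟦X⟧) n * qBinom (X ^ c) (2 * n) l - 1) := by
  set y : ℤ⟦X⟧ := X ^ c
  have aux : ∀ b : ℤ⟦X⟧, b * (qPoch y k * qPoch y l) = qPoch y (2 * n) →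
      y ^ (k + 1) ∣ qPoch y n * b - 1 := by
    intro b hb
    refine (isUnit_qPoch hc l).dvd_mul_left.1 ?_
    rw [show qPoch y l * (qPoch y n * b - 1) = b * qPoch y l * (qPoch y n - qPoch y k) +
      (b * (qPoch y k * qPoch y l) - qPoch y l) by ring, hb]
    exact dvd_add (Dvd.dvd.mul_left (pow_dvd_qPoch_sub y (by omega)) _)
      ((pow_dvd_pow y (by omega)).trans (pow_dvd_qPoch_sub y (by omega : l ≤ 2 * n)))
  constructor
  · apply aux
    rw [← hkl, qBinom_mul_qPoch]
  · apply aux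
    rw [← hkl, add_comm k l, mul_comm (qPoch y k), qBinom_mul_qPoch]

/-- `∏ (1 - X^b)` over the `b ≤ 5 n` with `b ≡ ±1` modulo `5`. -/
noncomputable def prodOneFour (n : ℕ) : ℤ⟦X⟧ :=
  ∏ i ∈ Finset.range n, ((1 - X ^ (5 * i + 1)) * (1 - X ^ (5 * i + 4)))

theorem prod_X_pow_sub_eq (m : ℕ) :
    ∏ i ∈ Finset.range (2 * (m + 1)), ((X : ℤ⟦X⟧) ^ (5 * m + 4) + -1 * (X ^ 5) ^ i) =
      (-1) ^ (m + 1) * X ^ (5 * (m + 1).choose 2 + (m + 1) * (5 * m + 4)) * prodOneFour (m + 1) := by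
  have h₁ : ∏ i ∈ Finset.range (m + 1), ((X : ℤ⟦X⟧) ^ (5 * m + 4) + -1 * (X ^ 5) ^ i) =
      (-1) ^ (m + 1) * X ^ (5 * (m + 1).choose 2) *
        ∏ i ∈ Finset.range (m + 1), (1 - X ^ (5 * i + 4)) := by
    have h₂ : ∀ i ∈ Finset.range (m + 1), (X : ℤ⟦X⟧) ^ (5 * m + 4) + -1 * (X ^ 5) ^ i =
        (-1 * (X ^ 5) ^ i) * (1 - X ^ (5 * (m + 1 - 1 - i) + 4)) := by
      intro i hi
      obtain ⟨t, rfl⟩ := Nat.exists_eq_add_of_le (show i ≤ m by simpa [Nat.lt_succ_iff] using hi)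
      rw [show i + t + 1 - 1 - i = t by omega]
      ring
    rw [Finset.prod_congr rfl h₂, Finset.prod_mul_distrib, Finset.prod_mul_distrib,
      Finset.prod_range_reflect (fun i => (1 : ℤ⟦X⟧) - X ^ (5 * i + 4)), Finset.prod_const,
      Finset.card_range, Finset.prod_pow_eq_pow_sum, Finset.sum_range_id, ← Nat.choose_two_right, pow_mul]
  have h₃ : ∏ i ∈ Finset.range (m + 1), ((X : ℤ⟦X⟧) ^ (5 * m + 4) + -1 * (X ^ 5) ^ (m + 1 + i)) =
      X ^ ((m + 1) * (5 * m + 4)) * ∏ i ∈ Finset.range (m + 1), (1 - X ^ (5 * i + 1)) := by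
    rw [mul_comm (m + 1), pow_mul, ← Finset.card_range (m + 1), ← Finset.prod_const,
      Finset.card_range, ← Finset.prod_mul_distrib]
    refine Finset.prod_congr rfl fun i _ => ?_
    ring
  rw [two_mul, Finset.prod_range_add, h₁, h₃, prodOneFour, Finset.prod_mul_distrib]
  ring

theorem choose_two_add (a b : ℕ) :
    (a + b).choose 2 = a.choose 2 + b.choose 2 + a * b := by
  induction b with
  | zero => simp
  | succ b ih =>
    rw [← add_assoc, Nat.choose_succ_succ' (a + b) 1, ih, Nat.choose_succ_succ' b 1]
    simp only [Nat.choose_one_right]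
    ring

theorem two_mul_choose_two_succ (a : ℕ) : 2 * (a + 1).choose 2 = (a + 1) * a := by
  induction a with
  | zero => rfl
  | succ a ih =>
    rw [Nat.choose_succ_succ' (a + 1) 1, Nat.choose_one_right, mul_add, ih]
    ring

/-- The finite form of the triple product, for base `X ^ 5`. -/
theorem prodOneFour_eq_sum (n : ℕ) (hn : n ≠ 0) :
    prodOneFour n =
      ∑ j ∈ Finset.range (n + 1),
        (-1) ^ j * X ^ (j + 5 * j.choose 2) * qBinom (X ^ 5) (2 * n) (n + j) +
      ∑ r ∈ Finset.range n,
        (-1) ^ (r + 1) * X ^ (4 * (r + 1) + 5 * (r + 1).choose 2) *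
          qBinom (X ^ 5) (2 * n) (n - (r + 1)) := by
  obtain ⟨m, rfl⟩ := Nat.exists_eq_succ_of_ne_zero hn
  rw [Nat.succ_eq_add_one]
  have hE : ((-1) ^ (m + 1) * X ^ (5 * (m + 1).choose 2 + (m + 1) * (5 * m + 4)) : ℤ⟦X⟧) ≠ 0 :=
    mul_ne_zero (pow_ne_zero _ (neg_ne_zero.2 one_ne_zero)) (pow_ne_zero _ X_ne_zero)
  refine mul_left_cancel₀ hE ?_
  rw [← prod_X_pow_sub_eq, prod_add_mul_pow_eq_sum_qBinom,
    show 2 * (m + 1) + 1 = (m + 1) + (m + 1 + 1) by ring, Finset.sum_range_add,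
    mul_add (_ ^ _ * _ : ℤ⟦X⟧), add_comm]
  congr 1
  · rw [Finset.mul_sum]
    refine Finset.sum_congr rfl fun j hj => ?_
    obtain ⟨t, ht⟩ := Nat.exists_eq_add_of_le (show j ≤ m + 1 by simpa [Nat.lt_succ_iff] using hj)
    rw [show 2 * (m + 1) - (m + 1 + j) = t by omega, ← pow_mul, ← pow_mul, choose_two_add (m + 1) j]
    have e : 5 * ((m + 1).choose 2 + j.choose 2 + (m + 1) * j) + (5 * m + 4) * t =
        (5 * (m + 1).choose 2 + (m + 1) * (5 * m + 4)) + (j + 5 * j.choose 2) := by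
      rw [show (m + 1) * (5 * m + 4) = (j + t) * (5 * m + 4) by rw [ht]]
      ring
    calc _ = (-1 : ℤ⟦X⟧) ^ (m + 1 + j) * X ^ (5 * ((m + 1).choose 2 + j.choose 2 + (m + 1) * j) +
          (5 * m + 4) * t) * qBinom (X ^ 5) (2 * (m + 1)) (m + 1 + j) := by ring
      _ = _ := by rw [e]; ring
  · rw [Finset.mul_sum, ← Finset.sum_range_reflect]
    refine Finset.sum_congr rfl fun r hr => ?_
    obtain ⟨t, ht⟩ := Nat.exists_eq_add_of_le (show r ≤ m by simpa [Nat.lt_succ_iff] using hr)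
    rw [show 2 * (m + 1) - (m + 1 - 1 - r) = m + 1 + (r + 1) by omega,
      show m + 1 - 1 - r = t by omega, show m + 1 - (r + 1) = t by omega, ← pow_mul, ← pow_mul]
    have e : 5 * t.choose 2 + (5 * m + 4) * (m + 1 + (r + 1)) =
        (5 * (m + 1).choose 2 + (m + 1) * (5 * m + 4)) + (4 * (r + 1) + 5 * (r + 1).choose 2) := by
      have h₁ := choose_two_add (r + 1) t
      have h₂ := two_mul_choose_two_succ r
      rw [show r + 1 + t = m + 1 by omega] at h₁
      subst ht
      nlinarith
    have hs : ((-1) ^ t : ℤ⟦X⟧) = (-1) ^ (m + 1) * (-1) ^ (r + 1) := by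
      rw [← pow_add, show m + 1 + (r + 1) = t + 2 * (r + 1) by omega, pow_add, pow_mul]
      simp
    calc _ = (-1 : ℤ⟦X⟧) ^ t * X ^ (5 * t.choose 2 + (5 * m + 4) * (m + 1 + (r + 1))) *
          qBinom (X ^ 5) (2 * (m + 1)) t := by ring
      _ = _ := by rw [e, hs]; ring

/-- The truncated theta series attached to the residues `±1` modulo `5`. -/
theorem X_pow_dvd_qPoch_mul_prodOneFour_sub (n : ℕ) (hn : n ≠ 0) :
    (X : ℤ⟦X⟧) ^ n ∣ qPoch (X ^ 5) n * prodOneFour n -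
      ∑ r ∈ Finset.range n, (-1) ^ r * X ^ (4 * r + 5 * r.choose 2) * (1 - X ^ (1 + 2 * r)) := by
  have h₁ : ∀ j, j ≤ n → (X : ℤ⟦X⟧) ^ n ∣ X ^ (j + 5 * j.choose 2) *
      (qPoch (X ^ 5) n * qBinom (X ^ 5) (2 * n) (n + j) - 1) := by
    intro j hj
    have := (pow_dvd_qPoch_mul_qBinom_sub_one (c := 5) (n := n) (k := n - j) (l := n + j)
      (by norm_num) (by omega) (by omega)).2
    refine (pow_dvd_pow X (show n ≤ j + 5 * j.choose 2 + 5 * (n - j + 1) by omega)).trans ?_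
    rw [pow_add, pow_mul X 5]
    exact mul_dvd_mul_left _ this
  have h₂ : ∀ j, j ≤ n → (X : ℤ⟦X⟧) ^ n ∣ X ^ (4 * j + 5 * j.choose 2) *
      (qPoch (X ^ 5) n * qBinom (X ^ 5) (2 * n) (n - j) - 1) := by
    intro j hj
    have := (pow_dvd_qPoch_mul_qBinom_sub_one (c := 5) (n := n) (k := n - j) (l := n + j)
      (by norm_num) (by omega) (by omega)).1
    refine (pow_dvd_pow X (show n ≤ 4 * j + 5 * j.choose 2 + 5 * (n - j + 1) by omega)).trans ?_
    rw [pow_add, pow_mul X 5]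
    exact mul_dvd_mul_left _ this
  have hB : ∑ r ∈ Finset.range n,
        ((-1) ^ r * X ^ (4 * r + 5 * r.choose 2) * (1 - X ^ (1 + 2 * r)) : ℤ⟦X⟧) =
      ∑ j ∈ Finset.range (n + 1), (-1) ^ j * X ^ (j + 5 * j.choose 2) +
      ∑ r ∈ Finset.range n, (-1) ^ (r + 1) * X ^ (4 * (r + 1) + 5 * (r + 1).choose 2) -
      (-1) ^ n * X ^ (4 * n + 5 * n.choose 2) := by
    have h := Finset.sum_range_succ' (fun r => ((-1) ^ r * X ^ (4 * r + 5 * r.choose 2) : ℤ⟦X⟧)) n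
    rw [Finset.sum_range_succ] at h
    have h' : ∑ r ∈ Finset.range n,
          ((-1) ^ r * X ^ (4 * r + 5 * r.choose 2) * (1 - X ^ (1 + 2 * r)) : ℤ⟦X⟧) =
        ∑ r ∈ Finset.range n, (-1) ^ r * X ^ (4 * r + 5 * r.choose 2) +
        ∑ r ∈ Finset.range n, (-1) ^ (r + 1) * X ^ ((r + 1) + 5 * (r + 1).choose 2) := by
      rw [← Finset.sum_add_distrib]
      refine Finset.sum_congr rfl fun r _ => ?_
      rw [Nat.choose_succ_succ' r 1, Nat.choose_one_right]
      ring
    rw [h', Finset.sum_range_succ' _ n]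
    simp only [Nat.choose_zero_succ, mul_zero, add_zero, pow_zero, mul_one] at h ⊢
    linear_combination h
  rw [hB, prodOneFour_eq_sum n hn, mul_add, Finset.mul_sum, Finset.mul_sum]
  have hsplit : ∀ a b c d e : ℤ⟦X⟧, a + b - (c + d - e) = (a - c) + (b - d) + e := by
    intros; ring
  rw [hsplit, ← Finset.sum_sub_distrib, ← Finset.sum_sub_distrib]
  refine dvd_add (dvd_add (Finset.dvd_sum fun j hj => ?_) (Finset.dvd_sum fun r hr => ?_))
    (Dvd.dvd.mul_left (pow_dvd_pow X (by omega)) _)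
  · convert (h₁ j (by simpa [Nat.lt_succ_iff] using hj)).mul_left ((-1) ^ j) using 1
    ring
  · convert (h₂ (r + 1) (by simpa using hr)).mul_left ((-1) ^ (r + 1)) using 1
    ring

end TripleProduct

/-! ### Gap two: the second Rogers–Ramanujan identity -/

section RogersRamanujan

open PowerSeries

/-- `(1 - X^(r+1)) ⋯ (1 - X^(r+i))`. -/
noncomputable def shiftedPoch (r i : ℕ) : ℤ⟦X⟧ := ∏ s ∈ Finset.range i, (1 - X ^ (r + 1 + s))

theorem shiftedPoch_succ_right (r i : ℕ) :
    shiftedPoch r (i + 1) = shiftedPoch r i * (1 - X ^ (r + 1 + i)) :=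
  Finset.prod_range_succ _ _

theorem one_sub_mul_shiftedPoch_succ_left (r i : ℕ) :
    (1 - X ^ (r + 1)) * shiftedPoch (r + 1) i = shiftedPoch r i * (1 - X ^ (r + 1 + i)) := by
  rw [← shiftedPoch_succ_right, shiftedPoch, shiftedPoch, Finset.prod_range_succ', mul_comm]
  congr 1
  exact Finset.prod_congr rfl fun s _ => by ring_nf

/-- The partial sums of the series satisfying the recursion of `gapSeries 2 (i + 1)`. -/
noncomputable def gapTheta (R i : ℕ) : ℤ⟦X⟧ :=
  ∑ r ∈ Finset.range R, (-1) ^ r * X ^ ((2 * i + 3) * r + 5 * r.choose 2) *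
    (1 - X ^ (2 * i + 2 + 4 * r)) * shiftedPoch r i

/-- The partial sums of the auxiliary series in the recursion of `gapTheta`. -/
noncomputable def gapThetaAux (R i : ℕ) : ℤ⟦X⟧ :=
  ∑ r ∈ Finset.range R, (-1) ^ r * X ^ ((2 * i + 4) * r + 5 * r.choose 2) *
    (1 - X ^ (i + 1 + 2 * r)) * shiftedPoch r i

theorem gapTheta_sub (R i : ℕ) :
    gapTheta R i - gapThetaAux R i - X ^ (i + 1) * gapThetaAux R (i + 1) =
      -((-1) ^ R * X ^ ((2 * i + 3) * R + 5 * R.choose 2) * (1 - X ^ R) * shiftedPoch R i) := by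
  induction R with
  | zero => simp [gapTheta, gapThetaAux]
  | succ R ih =>
    have h := one_sub_mul_shiftedPoch_succ_left R i
    have h' := shiftedPoch_succ_right R i
    simp only [gapTheta, gapThetaAux, Finset.sum_range_succ, Nat.choose_succ_succ' R 1,
      Nat.choose_one_right] at ih ⊢
    rw [h']
    linear_combination ih + (-1) ^ (R + 1) * X ^ ((2 * i + 3) * (R + 1) + 5 * (R + R.choose 2)) * h

theorem gapThetaAux_sub (R i : ℕ) :
    gapThetaAux R i - gapTheta R (i + 1) =
      -((-1) ^ R * X ^ ((2 * i + 4) * R + 5 * R.choose 2) * (1 - X ^ R) * shiftedPoch R i) := by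
  induction R with
  | zero => simp [gapTheta, gapThetaAux]
  | succ R ih =>
    have h := one_sub_mul_shiftedPoch_succ_left R i
    have h' := shiftedPoch_succ_right R i
    simp only [gapTheta, gapThetaAux, Finset.sum_range_succ, Nat.choose_succ_succ' R 1,
      Nat.choose_one_right] at ih ⊢
    rw [h']
    linear_combination ih + (-1) ^ (R + 1) * X ^ ((2 * i + 4) * (R + 1) + 5 * (R + R.choose 2)) * h

theorem X_pow_dvd_gapThetaAux_sub (n i : ℕ) : X ^ n ∣ gapThetaAux n i - gapTheta n (i + 1) := by
  rw [gapThetaAux_sub, dvd_neg]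
  refine Dvd.dvd.mul_right (Dvd.dvd.mul_right (Dvd.dvd.mul_left (pow_dvd_pow X ?_) _) _) _
  nlinarith

theorem X_pow_dvd_gapTheta_sub (n i : ℕ) :
    X ^ n ∣ gapTheta n i - gapTheta n (i + 1) - X ^ (i + 1) * gapTheta n (i + 2) := by
  have h₁ : X ^ n ∣ gapTheta n i - gapThetaAux n i - X ^ (i + 1) * gapThetaAux n (i + 1) := by
    rw [gapTheta_sub, dvd_neg]
    refine Dvd.dvd.mul_right (Dvd.dvd.mul_right (Dvd.dvd.mul_left (pow_dvd_pow X ?_) _) _) _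
    nlinarith
  have h₂ := X_pow_dvd_gapThetaAux_sub n i
  have h₃ := (X_pow_dvd_gapThetaAux_sub n (i + 1)).mul_left (X ^ (i + 1))
  convert dvd_add (dvd_add h₁ h₂) h₃ using 1
  ring

theorem X_pow_dvd_qPoch_sub_gapTheta {n i : ℕ} (hn : n ≠ 0) (hi : n ≤ i) :
    X ^ n ∣ qPoch X (5 * n) - gapTheta n i := by
  obtain ⟨m, rfl⟩ := Nat.exists_eq_succ_of_ne_zero hn
  rw [Nat.succ_eq_add_one] at *
  have h₀ : ∀ k, m + 1 ≤ k → (X : ℤ⟦X⟧) ^ (m + 1) ∣ qPoch X k - qPoch X m := fun k hk =>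
    pow_dvd_qPoch_sub X (by omega)
  have h₁ : shiftedPoch 0 i = qPoch X i :=
    Finset.prod_congr rfl fun s _ => by rw [zero_add, add_comm]
  have h₂ : (X : ℤ⟦X⟧) ^ (m + 1) ∣ gapTheta (m + 1) i - qPoch X i := by
    rw [gapTheta, Finset.sum_range_succ', ← h₁]
    simp only [pow_zero, Nat.choose_zero_succ, mul_zero, add_zero, one_mul]
    rw [show ∀ a b c : ℤ⟦X⟧, a + (1 - b) * c - c = a - b * c by intros; ring]
    refine dvd_sub (Finset.dvd_sum fun r _ => ?_) (Dvd.dvd.mul_right (pow_dvd_pow X (by omega)) _)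
    refine Dvd.dvd.mul_right (Dvd.dvd.mul_right (Dvd.dvd.mul_left (pow_dvd_pow X ?_) _) _) _
    nlinarith
  convert dvd_sub (dvd_sub (h₀ (5 * (m + 1)) (by omega)) (h₀ i hi)) h₂ using 1
  ring

theorem X_pow_dvd_qPoch_mul_gapSeries_sub {n : ℕ} (hn : n ≠ 0) (i : ℕ) :
    X ^ n ∣ qPoch X (5 * n) * gapSeries 2 (i + 1) - gapTheta n i := by
  have large : ∀ i, n ≤ i → X ^ n ∣ qPoch X (5 * n) * gapSeries 2 (i + 1) - gapTheta n i := by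
    intro i hi
    have h := (pow_dvd_pow X (show n ≤ i + 1 by omega)).trans (X_pow_dvd_gapSeries_sub_one 2 (i + 1))
    convert dvd_add (h.mul_left (qPoch X (5 * n))) (X_pow_dvd_qPoch_sub_gapTheta hn hi) using 1
    ring
  induction hk : n - i using Nat.strong_induction_on generalizing i with
  | _ k ih =>
    subst hk
    rcases le_or_gt n i with hi | hi
    · exact large i hi
    have h₁ := ih _ (by omega) (i + 1) rfl
    have h₂ := (ih _ (by omega) (i + 2) rfl).mul_left (X ^ (i + 1))
    rw [gapSeries_eq_add (by omega : 1 ≤ i + 1)]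
    convert dvd_sub (dvd_add h₁ h₂) (X_pow_dvd_gapTheta_sub n i) using 1
    rw [show i + 1 + 2 = i + 2 + 1 by ring]
    ring

/-- `∏ (1 - X^b)` over the `b ≤ 5 n` with `b ≡ ±2` modulo `5`. -/
noncomputable def prodTwoThree (n : ℕ) : ℤ⟦X⟧ :=
  ∏ i ∈ Finset.range n, ((1 - X ^ (5 * i + 2)) * (1 - X ^ (5 * i + 3)))

theorem qPoch_five_mul (n : ℕ) :
    qPoch X (5 * n) = prodTwoThree n * (qPoch (X ^ 5) n * prodOneFour n) := by
  induction n with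
  | zero => simp [qPoch, prodTwoThree, prodOneFour]
  | succ n ih =>
    rw [show 5 * (n + 1) = 5 * n + 1 + 1 + 1 + 1 + 1 by ring]
    simp only [qPoch_succ, prodTwoThree, prodOneFour, Finset.prod_range_succ] at ih ⊢
    rw [ih]
    ring

theorem isUnit_prodOneFour (n : ℕ) : IsUnit (prodOneFour n) := by
  rw [prodOneFour, IsUnit.prod_iff]
  exact fun i _ => (isUnit_one_sub_X_pow (by omega)).mul (isUnit_one_sub_X_pow (by omega))

theorem isUnit_prodTwoThree (n : ℕ) : IsUnit (prodTwoThree n) := by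
  rw [prodTwoThree, IsUnit.prod_iff]
  exact fun i _ => (isUnit_one_sub_X_pow (by omega)).mul (isUnit_one_sub_X_pow (by omega))

theorem X_pow_dvd_prodTwoThree_mul_gapSeries_sub_one {n : ℕ} (hn : n ≠ 0) :
    X ^ n ∣ prodTwoThree n * gapSeries 2 2 - 1 := by
  have h₁ := X_pow_dvd_qPoch_mul_gapSeries_sub hn 1
  have h₂ := X_pow_dvd_gapThetaAux_sub n 0
  have h₃ := X_pow_dvd_qPoch_mul_prodOneFour_sub n hn
  have h₄ : ∑ r ∈ Finset.range n,
      ((-1) ^ r * X ^ (4 * r + 5 * r.choose 2) * (1 - X ^ (1 + 2 * r)) : ℤ⟦X⟧) =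
      gapThetaAux n 0 := by
    simp [gapThetaAux, shiftedPoch]
  rw [h₄] at h₃
  refine ((isUnit_qPoch (by norm_num) n).mul (isUnit_prodOneFour n)).dvd_mul_left.1
    (?_ : _ ∣ qPoch (X ^ 5) n * prodOneFour n * _)
  rw [qPoch_five_mul] at h₁
  convert dvd_sub (dvd_sub h₁ h₂) h₃ using 1
  ring

theorem prodTwoThree_mul_rhoSeries (n : ℕ) :
    prodTwoThree n * rhoSeries {x | x ≡ 3 [MOD 5] ∨ x + 3 ≡ 0 [MOD 5]} =
      rhoSeries {x | (x ≡ 3 [MOD 5] ∨ x + 3 ≡ 0 [MOD 5]) ∧ 5 * n ≤ x} := by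
  induction n with
  | zero => simp [prodTwoThree]
  | succ n ih =>
    rw [prodTwoThree, Finset.prod_range_succ, ← prodTwoThree, mul_right_comm, ih, mul_comm,
      mul_comm (1 - _), mul_assoc, one_sub_X_pow_mul_rhoSeries _ (by omega),
      one_sub_X_pow_mul_rhoSeries _ (by omega)]
    · congr 1
      ext x
      simp only [Nat.ModEq, Set.mem_setOf_eq, Set.mem_diff, Set.mem_singleton_iff]
      omega
    · simp only [Nat.ModEq, Set.mem_setOf_eq, Set.mem_diff, Set.mem_singleton_iff]
      omega
    · simp only [Nat.ModEq, Set.mem_setOf_eq]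
      omega

/-- The second Rogers–Ramanujan identity. -/
theorem rhoSeries_two_three_eq_gapSeries :
    rhoSeries {x | x ≡ 3 [MOD 5] ∨ x + 3 ≡ 0 [MOD 5]} = gapSeries 2 2 := by
  ext n
  have h₁ := X_pow_dvd_prodTwoThree_mul_gapSeries_sub_one n.succ_ne_zero
  have h₂ : X ^ (n + 1) ∣
      rhoSeries {x | (x ≡ 3 [MOD 5] ∨ x + 3 ≡ 0 [MOD 5]) ∧ 5 * (n + 1) ≤ x} - 1 :=
    X_pow_dvd_rhoSeries_sub_one fun x hx => by have := hx.2; omega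
  rw [← prodTwoThree_mul_rhoSeries] at h₂
  have h₃ := dvd_sub h₂ h₁
  rw [sub_sub_sub_cancel_right, ← mul_sub, (isUnit_prodTwoThree _).dvd_mul_left,
    X_pow_dvd_iff] at h₃
  exact sub_eq_zero.1 (by simpa using h₃ n n.lt_succ_self)

theorem congMinusCount_le_gapCount_two (n : ℕ) : congMinusCount 2 3 n ≤ gapCount 2 3 n := by
  have hset : {x | (x ≡ 3 [MOD 2 + 3] ∨ x + 3 ≡ 0 [MOD 2 + 3]) ∧ x ≠ 2 + 3 - 3} =
      {x : ℕ | x ≡ 3 [MOD 5] ∨ x + 3 ≡ 0 [MOD 5]} \ {2} := rfl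
  have key : rhoSeries ({x : ℕ | x ≡ 3 [MOD 5] ∨ x + 3 ≡ 0 [MOD 5]} \ {2}) =
      gapSeries 2 3 - X ^ 2 * (gapSeries 2 2 - gapSeries 2 4) := by
    rw [← one_sub_X_pow_mul_rhoSeries (by simp [Nat.ModEq]) (by norm_num),
      rhoSeries_two_three_eq_gapSeries]
    linear_combination gapSeries_eq_add (d := 2) (a := 2) (by norm_num)
  have hc := congrArg (coeff n) key
  rw [map_sub, coeff_X_pow_mul'] at hc
  simp only [rhoSeries, gapSeries, coeff_mk, map_sub] at hc
  rw [congMinusCount_eq_rhoCount, hset]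
  have : gapCount 2 4 (n - 2) ≤ gapCount 2 2 (n - 2) :=
    gapCount_antitone 2 (n - 2) (by norm_num)
  split_ifs at hc <;> omega

end RogersRamanujan

/-! ### Large gaps: lower bounds for `gapCount` -/

theorem mul_le_gapCount {d a n w G : ℕ} (ha : 1 ≤ a)
    (h : ∀ x, a ≤ x → x < a + w → x ≤ n ∧ G ≤ gapCount d (x + d) (n - x)) :
    w * G ≤ gapCount d a n := by
  induction w generalizing a with
  | zero => simp
  | succ w ih =>
    obtain ⟨han, hG⟩ := h a le_rfl (by omega)
    have := ih (a := a + 1) (by omega) fun x hx hxw => h x (by omega) (by omega)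
    rw [gapCount_eq_add ha han, add_mul, one_mul]
    omega

theorem pow_le_gapCount {d a n v j : ℕ} (ha : 1 ≤ a)
    (h : 2 * j * (a + v) + (v + d) * (j * j + j) + 2 * a ≤ 2 * n) :
    (v + 1) ^ j ≤ gapCount d a n := by
  induction j generalizing a n with
  | zero => exact gapCount_pos (by omega) (by omega)
  | succ j ih =>
    rw [pow_succ']
    have hn : a + v ≤ n := by nlinarith
    refine mul_le_gapCount ha fun x hx hxv => ⟨by omega, ?_⟩
    have hanti : gapCount d (a + v + d) (n - x) ≤ gapCount d (x + d) (n - x) :=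
      gapCount_antitone d (n - x) (by omega)
    refine (ih (by omega) ?_).trans hanti
    have : n ≤ (n - x) + (a + v) := by omega
    nlinarith

theorem pow_le_gapCount_three {d n k : ℕ} (hd : 91 ≤ d) (hk : 3 ≤ k) (hn : (k * k - 1) * d ≤ n) :
    90 ^ (k - 1) ≤ gapCount d 3 n := by
  obtain ⟨v, rfl⟩ := Nat.exists_eq_add_of_le (show 2 ≤ d by omega)
  obtain ⟨j, rfl⟩ := Nat.exists_eq_add_of_le (show 1 ≤ k by omega)
  have hj : (1 + j) * (1 + j) - 1 = j * j + 2 * j := by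
    rw [show (1 + j) * (1 + j) = j * j + 2 * j + 1 by ring, Nat.add_sub_cancel]
  rw [hj] at hn
  rw [Nat.add_sub_cancel_left]
  refine (Nat.pow_le_pow_left (show 90 ≤ v + 1 by omega) j).trans (pow_le_gapCount (by norm_num) ?_)
  nlinarith

/-! ### Large gaps: upper bounds for `rhoCount` -/

/-- The number of ways to choose multiplicities for the weights in a list
with total weight at most `N`. -/
def weightCount : List ℕ → ℕ → ℕ
  | [], _ => 1
  | w :: l, N => ∑ i ∈ Finset.range (N / w + 1), weightCount l (N - i * w)

theorem weightCount_le_cons (w : ℕ) (l : List ℕ) (N : ℕ) :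
    weightCount l N ≤ weightCount (w :: l) N := by
  rw [weightCount, Finset.sum_range_succ']
  simp

theorem weightCount_cons_eq_add {w : ℕ} (hw : 0 < w) (l : List ℕ) {N : ℕ} (hN : w ≤ N) :
    weightCount (w :: l) N = weightCount l N + weightCount (w :: l) (N - w) := by
  rw [weightCount, weightCount, Finset.sum_range_succ', Nat.div_eq_sub_div hw hN, add_comm]
  congr 1
  · simp
  · refine Finset.sum_congr rfl fun i _ => ?_
    congr 1
    rw [Nat.sub_sub, add_mul, one_mul, add_comm]

theorem rhoCount_insert_le_weightCount {d b w : ℕ} {S : Set ℕ} {l : List ℕ} (hd : 0 < d)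
    (hw : 0 < w) (hb : w * d ≤ b) (h : ∀ n M, n < (M + 1) * d → rhoCount S n ≤ weightCount l M)
    (n M : ℕ) (hn : n < (M + 1) * d) : rhoCount (insert b S) n ≤ weightCount (w :: l) M := by
  induction n using Nat.strong_induction_on generalizing M with
  | _ n ih =>
    have hb1 : 1 ≤ b := (Nat.mul_pos hw hd).trans_le hb
    refine (rhoCount_insert_le hb1).trans ?_
    split_ifs with hbn
    · have hwM : w ≤ M := by
        have : w * d < (M + 1) * d := by omega
        exact Nat.lt_succ_iff.1 (Nat.lt_of_mul_lt_mul_right this)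
      rw [weightCount_cons_eq_add hw l hwM]
      refine Nat.add_le_add (h n M hn) (ih _ (by omega) _ ?_)
      obtain ⟨t, rfl⟩ := Nat.exists_eq_add_of_le hwM
      rw [Nat.add_sub_cancel_left]
      have : (w + t + 1) * d = w * d + (t + 1) * d := by ring
      omega
    · exact (h n M hn).trans (weightCount_le_cons w l M)

theorem rhoCount_singleton_le_one {b : ℕ} (hb : 1 ≤ b) (n : ℕ) : rhoCount {b} n ≤ 1 := by
  induction n using Nat.strong_induction_on with
  | _ n ih =>
    rcases Nat.eq_zero_or_pos n with rfl | hn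
    · rw [rhoCount_zero]
    rcases lt_or_ge n b with h | h
    · rw [rhoCount_eq_zero hn.ne' (by simpa using h)]
      exact zero_le_one
    · rw [rhoCount_eq_diff_add (Set.mem_singleton b) hb h, Set.diff_self,
        rhoCount_eq_zero hn.ne' (by simp), zero_add]
      exact ih _ (by omega)

/-- The weights `1, 2, 2, 3, 3, …, m + 1, m + 1`, in decreasing order. -/
def doubleWeights : ℕ → List ℕ
  | 0 => [1]
  | m + 1 => (m + 2) :: (m + 2) :: doubleWeights m

/-- The parts of size at most about `(m + 1) (d + 3)` counted by `congMinusCount d 3`. -/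
def smallParts (d m : ℕ) : Set ℕ :=
  {x | x = 3 ∨ x = d + 6 ∨ ∃ j, 2 ≤ j ∧ j ≤ m + 1 ∧ (x + 3 = j * (d + 3) ∨ x = j * (d + 3) + 3)}

theorem smallParts_zero (d : ℕ) : smallParts d 0 = insert (d + 6) {3} := by
  ext x
  simp only [smallParts, Set.mem_setOf_eq, Set.mem_insert_iff, Set.mem_singleton_iff]
  constructor
  · rintro (h | h | ⟨j, h⟩) <;> omega
  · tauto

theorem smallParts_succ (d m : ℕ) : smallParts d (m + 1) =
    insert ((m + 2) * (d + 3) - 3) (insert ((m + 2) * (d + 3) + 3) (smallParts d m)) := by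
  have h3 : 3 ≤ (m + 2) * (d + 3) := by nlinarith
  ext x
  simp only [smallParts, Set.mem_setOf_eq, Set.mem_insert_iff]
  constructor
  · rintro (h | h | ⟨j, h2, hj, hx⟩)
    · tauto
    · tauto
    · rcases Nat.lt_or_ge j (m + 2) with hjm | hjm
      · exact Or.inr (Or.inr (Or.inr (Or.inr ⟨j, h2, by omega, hx⟩)))
      · obtain rfl : j = m + 2 := by omega
        omega
  · rintro (h | h | h | h | ⟨j, h2, hj, hx⟩)
    · exact Or.inr (Or.inr ⟨m + 2, by omega, by omega, by omega⟩)
    · exact Or.inr (Or.inr ⟨m + 2, by omega, by omega, by omega⟩)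
    · exact Or.inl h
    · exact Or.inr (Or.inl h)
    · exact Or.inr (Or.inr ⟨j, h2, by omega, hx⟩)

theorem rhoCount_smallParts_le {d : ℕ} (hd : 0 < d) (m n M : ℕ) (hn : n < (M + 1) * d) :
    rhoCount (smallParts d m) n ≤ weightCount (doubleWeights m) M := by
  induction m generalizing n M with
  | zero =>
    rw [smallParts_zero]
    exact rhoCount_insert_le_weightCount hd one_pos (by omega)
      (fun n _ _ => rhoCount_singleton_le_one (by norm_num) n) n M hn
  | succ m ih =>
    rw [smallParts_succ]
    have h₁ : (m + 2) * (d + 3) = (m + 2) * d + 3 * m + 6 := by ring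
    exact rhoCount_insert_le_weightCount hd (by omega) (by omega)
      (rhoCount_insert_le_weightCount hd (by omega) (by omega) ih) n M hn

theorem congMinusCount_le_weightCount {d n m : ℕ} (hd : 3 < d) (hn : n < (m + 2) * d) :
    congMinusCount d 3 n ≤ weightCount (doubleWeights m) (m + 1) := by
  rw [congMinusCount_eq_rhoCount]
  refine le_trans (le_of_eq ?_) (rhoCount_smallParts_le (by omega) m n (m + 1) hn)
  refine rhoCount_congr fun x hx hxn => ?_
  simp only [smallParts, Set.mem_setOf_eq]
  have bound : ∀ j, j * (d + 3) ≤ x + 3 → j ≤ m + 1 := by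
    intro j hj
    by_contra! hlt
    have : (m + 2) * (d + 3) ≤ j * (d + 3) := Nat.mul_le_mul_right _ hlt
    nlinarith
  constructor
  · rintro ⟨h | h, hne⟩
    · rcases lt_or_ge x 3 with h3 | h3
      · rw [Nat.ModEq, Nat.mod_eq_of_lt (by omega), Nat.mod_eq_of_lt (by omega)] at h
        omega
      obtain ⟨j, hj⟩ := (Nat.modEq_iff_dvd' h3).1 h.symm
      rw [mul_comm] at hj
      rcases j with _ | _ | j
      · omega
      · omega
      · exact Or.inr (Or.inr ⟨j + 1 + 1, by omega, bound _ (by omega), by omega⟩)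
    · obtain ⟨j, hj⟩ := (Nat.modEq_zero_iff_dvd).1 h
      rw [mul_comm] at hj
      rcases j with _ | _ | j
      · omega
      · omega
      · exact Or.inr (Or.inr ⟨j + 1 + 1, by omega, bound _ (by omega), by omega⟩)
  · rintro (rfl | rfl | ⟨j, h2, hj, hx⟩)
    · exact ⟨Or.inl rfl, by omega⟩
    · refine ⟨Or.inl ?_, by omega⟩
      simp [Nat.ModEq, show d + 6 = 3 + (d + 3) by ring]
    · have : 2 * (d + 3) ≤ j * (d + 3) := Nat.mul_le_mul_right _ h2
      rcases hx with hx | hx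
      · exact ⟨Or.inr (by rw [hx, Nat.modEq_zero_iff_dvd]; exact dvd_mul_left _ _), by omega⟩
      · refine ⟨Or.inl ?_, by omega⟩
        simp [Nat.ModEq, hx, add_comm]

/-! ### Estimates for `weightCount` -/

theorem weightCount_mul_prod_le_one {K : Type*} [Field K] [LinearOrder K] [IsStrictOrderedRing K]
    {x : K} (hx₀ : 0 ≤ x) (hx₁ : x ≤ 1) (l : List ℕ) (N : ℕ) :
    weightCount l N * x ^ N * (l.map fun w => 1 - x ^ w).prod ≤ 1 := by
  induction l generalizing N with
  | nil => simpa [weightCount] using pow_le_one₀ hx₀ hx₁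
  | cons w l ih =>
    have hw : 0 ≤ 1 - x ^ w := sub_nonneg.2 (pow_le_one₀ hx₀ hx₁)
    rw [weightCount, List.map_cons, List.prod_cons]
    push_cast
    calc (∑ i ∈ Finset.range (N / w + 1), (weightCount l (N - i * w) : K)) * x ^ N *
          ((1 - x ^ w) * (l.map fun w => 1 - x ^ w).prod)
        = (∑ i ∈ Finset.range (N / w + 1), (x ^ w) ^ i * (weightCount l (N - i * w) *
          x ^ (N - i * w) * (l.map fun w => 1 - x ^ w).prod)) * (1 - x ^ w) := by
          simp only [Finset.sum_mul]
          refine Finset.sum_congr rfl fun i hi => ?_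
          have hi : i * w ≤ N := (Nat.mul_le_mul_right w (Nat.lt_succ_iff.1
            (Finset.mem_range.1 hi))).trans (Nat.div_mul_le_self N w)
          rw [show x ^ N = (x ^ w) ^ i * x ^ (N - i * w) by
            rw [← pow_mul, ← pow_add, mul_comm w, Nat.add_sub_cancel' hi]]
          ring
      _ ≤ (∑ i ∈ Finset.range (N / w + 1), (x ^ w) ^ i) * (1 - x ^ w) := by
          refine mul_le_mul_of_nonneg_right (Finset.sum_le_sum fun i _ => ?_) hw
          exact mul_le_of_le_one_right (by positivity) (ih _)
      _ ≤ 1 := by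
          rw [geom_sum_mul_neg]
          exact sub_le_self _ (by positivity)

theorem weightCount_le_of_one_le {K : Type*} [Field K] [LinearOrder K] [IsStrictOrderedRing K]
    {x : K} (hx₀ : 0 ≤ x) (hx₁ : x ≤ 1) {l : List ℕ} {N B : ℕ}
    (h : 1 ≤ B * (x ^ N * (l.map fun w => 1 - x ^ w).prod)) : weightCount l N ≤ B := by
  have hpos : 0 < x ^ N * (l.map fun w => 1 - x ^ w).prod :=
    pos_of_mul_pos_right (zero_lt_one.trans_le h) (Nat.cast_nonneg B)
  have hle := (weightCount_mul_prod_le_one hx₀ hx₁ l N).trans h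
  rw [mul_assoc] at hle
  exact_mod_cast le_of_mul_le_mul_right hle hpos

theorem neg_sum_log_one_sub_pow_le {x : ℝ} (hx₀ : 0 < x) (hx₁ : x < 1) (M : ℕ) :
    -∑ m ∈ Finset.range M, Real.log (1 - x ^ (m + 1)) ≤ x / (1 - x) * (Real.pi ^ 2 / 6) := by
  have h₁ : HasSum (fun j : ℕ => ∑ m ∈ Finset.range M, (x ^ (m + 1)) ^ (j + 1) / ((j : ℝ) + 1))
      (∑ m ∈ Finset.range M, -Real.log (1 - x ^ (m + 1))) := by
    refine hasSum_sum fun m _ => Real.hasSum_pow_div_log_of_abs_lt_one ?_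
    rw [abs_of_pos (pow_pos hx₀ _)]
    exact pow_lt_one₀ hx₀.le hx₁ (by omega)
  have h₂ : HasSum (fun j : ℕ => x / (1 - x) * (1 / ((j + 1 : ℕ) : ℝ) ^ 2))
      (x / (1 - x) * (Real.pi ^ 2 / 6)) := by
    refine HasSum.mul_left _ ?_
    simpa using (hasSum_nat_add_iff' 1).2 hasSum_zeta_two
  rw [← Finset.sum_neg_distrib]
  refine hasSum_le (fun j => ?_) h₁ h₂
  have hx : 0 < 1 - x := sub_pos.2 hx₁
  have hy : 0 < 1 - x ^ (j + 1) := sub_pos.2 (pow_lt_one₀ hx₀.le hx₁ (by omega))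
  have hj : (0 : ℝ) < j + 1 := by positivity
  have hgeom : ∑ m ∈ Finset.range M, (x ^ (m + 1)) ^ (j + 1) ≤
      x ^ (j + 1) / (1 - x ^ (j + 1)) := by
    rw [le_div_iff₀ hy, show ∑ m ∈ Finset.range M, (x ^ (m + 1)) ^ (j + 1) =
      x ^ (j + 1) * ∑ m ∈ Finset.range M, (x ^ (j + 1)) ^ m by
        rw [Finset.mul_sum]; exact Finset.sum_congr rfl fun m _ => by ring, mul_assoc,
      geom_sum_mul_neg]
    exact mul_le_of_le_one_right (by positivity) (sub_le_self _ (by positivity))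
  have hbern : ((j : ℝ) + 1) * x ^ j * (1 - x) ≤ 1 - x ^ (j + 1) := by
    rw [← geom_sum_mul_neg x (j + 1)]
    refine mul_le_mul_of_nonneg_right ?_ hx.le
    have := Finset.card_nsmul_le_sum (Finset.range (j + 1)) (fun i => x ^ i) (x ^ j) fun i hi =>
      pow_le_pow_of_le_one hx₀.le hx₁.le (Nat.lt_succ_iff.1 (Finset.mem_range.1 hi))
    simpa using this
  rw [← Finset.sum_div]
  refine (div_le_div_of_nonneg_right hgeom hj.le).trans ?_
  rw [div_div, div_mul_div_comm, mul_one, div_le_div_iff₀ (by positivity) (by positivity)]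
  push_cast
  calc x ^ (j + 1) * ((1 - x) * ((j : ℝ) + 1) ^ 2)
      = x * ((j : ℝ) + 1) * (((j : ℝ) + 1) * x ^ j * (1 - x)) := by ring
    _ ≤ x * ((j : ℝ) + 1) * (1 - x ^ (j + 1)) :=
        mul_le_mul_of_nonneg_left hbern (by positivity)
    _ = x * ((1 - x ^ (j + 1)) * ((j : ℝ) + 1)) := by ring

theorem sq_prod_le_prod_doubleWeights {x : ℝ} (hx₀ : 0 ≤ x) (hx₁ : x ≤ 1) (m : ℕ) :
    (∏ i ∈ Finset.range (m + 1), (1 - x ^ (i + 1))) ^ 2 ≤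
      ((doubleWeights m).map fun w => 1 - x ^ w).prod := by
  induction m with
  | zero =>
    simp only [doubleWeights, zero_add, Finset.prod_range_one, List.map_cons, List.map_nil,
      List.prod_cons, List.prod_nil, pow_one, mul_one]
    nlinarith
  | succ m ih =>
    rw [Finset.prod_range_succ, mul_pow, doubleWeights, List.map_cons, List.map_cons,
      List.prod_cons, List.prod_cons, ← mul_assoc, ← sq, mul_comm]
    exact mul_le_mul_of_nonneg_left ih (sq_nonneg _)

theorem exp_neg_le_prod_one_sub_pow {x : ℝ} (hx₀ : 0 < x) (hx₁ : x < 1) (M : ℕ) :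
    Real.exp (-(x / (1 - x) * (Real.pi ^ 2 / 6))) ≤
      ∏ i ∈ Finset.range M, (1 - x ^ (i + 1)) := by
  have hpos : ∀ i : ℕ, 0 < 1 - x ^ (i + 1) := fun i =>
    sub_pos.2 (pow_lt_one₀ hx₀.le hx₁ (by omega))
  rw [← Real.le_log_iff_exp_le (Finset.prod_pos fun i _ => hpos i),
    Real.log_prod fun i _ => (hpos i).ne']
  linarith [neg_sum_log_one_sub_pow_le hx₀ hx₁ M]

set_option exponentiation.threshold 1000 in
theorem exp_le_ninety_pow {k : ℕ} (hk : 10 ≤ k) :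
    Real.exp (3.645 * k + 4) ≤ 90 ^ (k - 1) := by
  have h₁ : Real.exp 4.495 ≤ 90 := by
    refine le_of_pow_le_pow_left₀ (n := 200) (by norm_num) (by norm_num) ?_
    rw [← Real.exp_nat_mul, show ((200 : ℕ) : ℝ) * 4.495 = ((899 : ℕ) : ℝ) * 1 by norm_num,
      Real.exp_nat_mul]
    refine (pow_le_pow_left₀ (Real.exp_pos 1).le Real.exp_one_lt_d9.le 899).trans ?_
    norm_num
  have h₂ : (10 : ℝ) ≤ k := by exact_mod_cast hk
  calc Real.exp (3.645 * k + 4) ≤ Real.exp ((k - 1 : ℕ) * 4.495) := by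
        rw [Nat.cast_sub (by omega), Nat.cast_one]
        exact Real.exp_le_exp.2 (by linarith)
    _ = Real.exp 4.495 ^ (k - 1) := Real.exp_nat_mul _ _
    _ ≤ 90 ^ (k - 1) := pow_le_pow_left₀ (Real.exp_pos _).le h₁ _

theorem weightCount_doubleWeights_le_of_ten_le {k m : ℕ} (hk : 10 ≤ k) (hm : m + 2 = k * k + 2 * k) :
    weightCount (doubleWeights m) (m + 1) ≤ 90 ^ (k - 1) := by
  have hk₀ : (0 : ℝ) < k := by exact_mod_cast (by omega : 0 < k)
  set x : ℝ := k / (k + 2) with hx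
  have hx₀ : 0 < x := by positivity
  have hx₁ : x < 1 := (div_lt_one (by positivity)).2 (by linarith)
  have hxk : x / (1 - x) = k / 2 := by
    rw [hx]
    field_simp
    ring
  refine weightCount_le_of_one_le hx₀.le hx₁.le ?_
  have hpi : Real.pi ^ 2 / 6 ≤ 1.645 := by nlinarith [Real.pi_lt_d4, Real.pi_pos]
  have hprod : Real.exp (-(1.645 * k)) ≤ ((doubleWeights m).map fun w => 1 - x ^ w).prod := by
    refine le_trans ?_ (sq_prod_le_prod_doubleWeights hx₀.le hx₁.le m)
    refine le_trans ?_ (pow_le_pow_left₀ (Real.exp_pos _).le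
      (exp_neg_le_prod_one_sub_pow hx₀ hx₁ (m + 1)) 2)
    rw [← Real.exp_nat_mul, Real.exp_le_exp, hxk]
    push_cast
    nlinarith
  have hpow : Real.exp (-(2 * k + 4)) ≤ x ^ (m + 1) := by
    have hinv : x⁻¹ ≤ Real.exp (2 / k) := by
      rw [hx, inv_div, add_div, div_self hk₀.ne', add_comm]
      exact Real.add_one_le_exp _
    have hm' : ((m : ℝ) + 2) = k * k + 2 * k := by exact_mod_cast hm
    rw [Real.exp_neg, inv_le_comm₀ (Real.exp_pos _) (by positivity), ← inv_pow]
    refine (pow_le_pow_left₀ (by positivity) hinv _).trans ?_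
    rw [← Real.exp_nat_mul, Real.exp_le_exp, mul_div_assoc', div_le_iff₀ hk₀]
    push_cast
    nlinarith
  have h90 := exp_le_ninety_pow hk
  push_cast
  calc (1 : ℝ) = Real.exp (3.645 * k + 4) * (Real.exp (-(2 * k + 4)) * Real.exp (-(1.645 * k))) := by
        rw [← Real.exp_add, ← Real.exp_add, eq_comm, Real.exp_eq_one_iff]
        ring
    _ ≤ _ := by gcongr

theorem weightCount_doubleWeights_le {k m : ℕ} (hk : 3 ≤ k) (hm : m + 2 = k * k + 2 * k) :
    weightCount (doubleWeights m) (m + 1) ≤ 90 ^ (k - 1) := by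
  rcases Nat.lt_or_ge k 10 with hk' | hk'
  · interval_cases k
    · obtain rfl : m = 13 := by omega
      decide +kernel
    · obtain rfl : m = 22 := by omega
      exact weightCount_le_of_one_le (x := (5 / 7 : ℚ)) (by norm_num) (by norm_num)
        (by decide +kernel)
    · obtain rfl : m = 33 := by omega
      exact weightCount_le_of_one_le (x := (3 / 4 : ℚ)) (by norm_num) (by norm_num)
        (by decide +kernel)
    · obtain rfl : m = 46 := by omega
      exact weightCount_le_of_one_le (x := (3 / 4 : ℚ)) (by norm_num) (by norm_num)
        (by decide +kernel)
    · obtain rfl : m = 61 := by omega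
      exact weightCount_le_of_one_le (x := (3 / 4 : ℚ)) (by norm_num) (by norm_num)
        (by decide +kernel)
    · obtain rfl : m = 78 := by omega
      exact weightCount_le_of_one_le (x := (3 / 4 : ℚ)) (by norm_num) (by norm_num)
        (by decide +kernel)
    · obtain rfl : m = 97 := by omega
      exact weightCount_le_of_one_le (x := (3 / 4 : ℚ)) (by norm_num) (by norm_num)
        (by decide +kernel)
  · exact weightCount_doubleWeights_le_of_ten_le hk' hm

/-! ### Large gaps -/

theorem gapCount_three_ge_two {d n : ℕ} (hn : d + 6 ≤ n) : 2 ≤ gapCount d 3 n := by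
  rw [gapCount_eq_add (by norm_num) (by omega)]
  have h₁ : 1 ≤ gapCount d (3 + 1) n := gapCount_pos (by omega) (by omega)
  have h₂ : 1 ≤ gapCount d (3 + d) (n - 3) := gapCount_pos (by omega) (by omega)
  omega

theorem congMinusCount_le_one {d n : ℕ} (hd : 3 < d) (hn : n < d + 6) :
    congMinusCount d 3 n ≤ 1 := by
  rw [congMinusCount_eq_rhoCount]
  refine le_trans (le_of_eq (rhoCount_congr fun x hx hxn => ?_))
    (rhoCount_singleton_le_one (show 1 ≤ 3 by norm_num) n)
  simp only [Set.mem_setOf_eq, Set.mem_singleton_iff]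
  constructor
  · rintro ⟨h | h, hne⟩
    · rcases Nat.lt_or_ge x (d + 3) with hlt | hge
      · rwa [Nat.ModEq, Nat.mod_eq_of_lt hlt, Nat.mod_eq_of_lt (by omega)] at h
      · rw [Nat.ModEq, Nat.mod_eq_sub_mod hge, Nat.mod_eq_of_lt (by omega),
          Nat.mod_eq_of_lt (by omega)] at h
        omega
    · obtain ⟨j, hj⟩ := (Nat.modEq_zero_iff_dvd).1 h
      rcases j with _ | _ | j
      · omega
      · omega
      · nlinarith
  · rintro rfl
    exact ⟨Or.inl rfl, by omega⟩

theorem congMinusCount_eq_zero {d n : ℕ} (hd : 3 < d) (hn₀ : n ≠ 0) (hn : n < 3) :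
    congMinusCount d 3 n = 0 := by
  rw [congMinusCount_eq_rhoCount, rhoCount_congr (S := ∅), rhoCount_eq_zero hn₀ (by simp)]
  intro x hx hxn
  simp only [Set.mem_setOf_eq, Set.mem_empty_iff_false, iff_false, not_and]
  intro h
  rw [Nat.ModEq, Nat.ModEq, Nat.mod_eq_of_lt (by omega : x < d + 3),
    Nat.mod_eq_of_lt (by omega : 3 < d + 3), Nat.mod_eq_of_lt (by omega : x + 3 < d + 3)] at h
  simp at h
  omega

theorem congMinusCount_le_gapCount_of_large {d n : ℕ} (hd : 91 ≤ d) (hn : 1 ≤ n) :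
    congMinusCount d 3 n ≤ gapCount d 3 n := by
  rcases Nat.lt_or_ge n 3 with h₃ | h₃
  · rw [congMinusCount_eq_zero (by omega) (by omega) h₃]
    exact Nat.zero_le _
  rcases Nat.lt_or_ge n (d + 6) with h₁ | h₁
  · exact (congMinusCount_le_one (by omega) h₁).trans (gapCount_pos (by omega) h₃)
  rcases Nat.lt_or_ge n (2 * d) with h₂ | h₂
  · exact ((congMinusCount_le_weightCount (m := 0) (by omega) h₂).trans (by decide)).trans
      (gapCount_three_ge_two h₁)
  rcases Nat.lt_or_ge n (4 * d) with h₄ | h₄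
  · refine ((congMinusCount_le_weightCount (m := 2) (by omega) h₄).trans
      (by decide +kernel : _ ≤ (9 + 1) ^ 1)).trans (pow_le_gapCount (by norm_num) (by omega))
  rcases Nat.lt_or_ge n (8 * d) with h₈ | h₈
  · refine ((congMinusCount_le_weightCount (m := 6) (by omega) h₈).trans
      (by decide +kernel : _ ≤ (109 + 1) ^ 1)).trans (pow_le_gapCount (by norm_num) (by omega))
  set k := Nat.sqrt (n / d + 1)
  have hdiv : 8 ≤ n / d := (Nat.le_div_iff_mul_le (by omega)).2 h₈
  have hk : 3 ≤ k := Nat.le_sqrt.2 (by omega)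
  have hlo : k * k ≤ n / d + 1 := Nat.sqrt_le _
  have hhi : n / d + 1 < (k + 1) * (k + 1) := Nat.lt_succ_sqrt _
  obtain ⟨m, hm⟩ : ∃ m, m + 2 = k * k + 2 * k := ⟨k * k + 2 * k - 2, by omega⟩
  have hn' : n < (m + 2) * d := by
    rw [← Nat.div_lt_iff_lt_mul (by omega), hm]
    linarith
  refine (congMinusCount_le_weightCount (by omega) hn').trans
    ((weightCount_doubleWeights_le hk hm).trans (pow_le_gapCount_three hd hk ?_))
  exact (Nat.mul_le_mul_right d (by omega)).trans (Nat.div_mul_le_self n d)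

theorem stmt0 (d n : ℕ) (hn : 1 ≤ n)
    (hd : d = 1 ∨ d = 2 ∨ d = 91 ∨ d = 92 ∨ d = 93 ∨ 187 ≤ d) :
    congMinusCount d 3 n ≤ gapCount d 3 n := by
  rcases hd with rfl | rfl | hd
  · exact congMinusCount_le_gapCount_one n
  · exact congMinusCount_le_gapCount_two n
  · exact congMinusCount_le_gapCount_of_large (by omega) hn
end

section
/- For all integers d, n ≥ 1 and a ≥ 5 such that ⌈d/a⌉ ≥ 2^{a+3} − 1, one has q_d^{(a)}(n) ≥ Q_d^{(a,-,-)}(n). -/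
/-- Splits a list with gaps at least `127` into a set of multiples of `127` (the parts, or summands
of parts, of residue `v`) and a list with gaps at least `127` whose residues modulo `127` are less
than `v`. It is a left inverse of the construction in `exists_interleaving`. -/
def deinterleave (v : ℕ) : List ℕ → Finset ℕ × List ℕ
  | [] => (∅, [])
  | o :: os =>
    let r := deinterleave v os
    if (o - 1) % 127 + 1 = v then (insert (o / 127) r.1, r.2)
    else if v < (o - 1) % 127 + 1 then
      (insert 0 (r.1.image Nat.succ), (o - v - 127 * r.1.card) :: r.2)
    else (r.1.image Nat.succ, (o - 127 * r.1.card) :: r.2)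

/-- The nonzero elements of `E`, each decreased by one. -/
def lowered (E : Finset ℕ) : Finset ℕ := (E.erase 0).image Nat.pred

theorem image_succ_lowered (E : Finset ℕ) : (lowered E).image Nat.succ = E.erase 0 := by
  ext x
  simp only [lowered, Finset.mem_image, Finset.mem_erase]
  constructor
  · rintro ⟨_, ⟨y, ⟨hy, hyE⟩, rfl⟩, rfl⟩
    rw [Nat.succ_pred hy]
    exact ⟨hy, hyE⟩
  · rintro ⟨hx, hxE⟩
    exact ⟨x.pred, ⟨x, ⟨hx, hxE⟩, rfl⟩, Nat.succ_pred hx⟩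

theorem card_lowered (E : Finset ℕ) : (lowered E).card = (E.erase 0).card := by
  rw [← image_succ_lowered, Finset.card_image_of_injective _ Nat.succ_injective]

theorem sum_erase_zero (E : Finset ℕ) (v : ℕ) :
    ∑ m ∈ E.erase 0, (127 * m + v) =
      ∑ m ∈ lowered E, (127 * m + v) + 127 * (lowered E).card := by
  rw [← image_succ_lowered, Finset.sum_image (fun _ _ _ _ h => Nat.succ_injective h),
    Finset.card_eq_sum_ones, Finset.mul_sum, ← Finset.sum_add_distrib]
  refine Finset.sum_congr rfl fun m _ => ?_
  rw [Nat.succ_eq_add_one]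
  ring

/-- A set `E`, standing for the distinct parts `127 * m + v` with `m ∈ E`, can be merged into a list
with gaps at least `127` and residues less than `v` so that the gaps are preserved and `E` can be
recovered. Going through the list from its largest part `c`, either the largest element of `E`
becomes a part of its own above `c`, or `c` grows by `127` for each nonzero element of `E`, absorbs
an additional `v` if `0 ∈ E`, and the elements of `E` decrease by one. -/
theorem exists_interleaving {v : ℕ} (hv : 1 ≤ v) (hv' : v ≤ 64) (k : ℕ) :
    ∀ (E : Finset ℕ) (cs : List ℕ), E.card + cs.length = k →
      cs.Pairwise (fun x y => y + 127 ≤ x) →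
      (∀ c ∈ cs, ∃ x b, c = 127 * x + b ∧ 1 ≤ b ∧ b < v) →
      ∃ os : List ℕ, os.Pairwise (fun x y => y + 127 ≤ x) ∧
        (∀ o ∈ os, ∃ x b, o = 127 * x + b ∧ 1 ≤ b ∧ b < 2 * v) ∧
        os.sum = cs.sum + ∑ m ∈ E, (127 * m + v) ∧
        deinterleave v os = (E, cs) ∧
        ∀ B, (∀ m ∈ E, 127 * m + v ≤ B) → (∀ c ∈ cs, c + 127 * E.card ≤ B) →
          ∀ o ∈ os, o ≤ B := by
  induction k using Nat.strong_induction_on with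
  | _ k ih =>
  intro E cs hk hgap hres
  have top : ∀ hE : E.Nonempty, (∀ c ∈ cs, c + 127 * E.card ≤ 127 * E.max' hE + v) →
      ∃ os : List ℕ, os.Pairwise (fun x y => y + 127 ≤ x) ∧
        (∀ o ∈ os, ∃ x b, o = 127 * x + b ∧ 1 ≤ b ∧ b < 2 * v) ∧
        os.sum = cs.sum + ∑ m ∈ E, (127 * m + v) ∧
        deinterleave v os = (E, cs) ∧
        ∀ B, (∀ m ∈ E, 127 * m + v ≤ B) → (∀ c ∈ cs, c + 127 * E.card ≤ B) →
          ∀ o ∈ os, o ≤ B := by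
    intro hE hc
    set m := E.max' hE with hm
    have hmE : m ∈ E := E.max'_mem hE
    have hcard := Finset.card_erase_add_one hmE
    obtain ⟨os, h1, h2, h3, h4, h5⟩ := ih _ (by omega) (E.erase m) cs rfl hgap hres
    refine ⟨(127 * m + v) :: os, ?_, ?_, ?_, ?_, ?_⟩
    · refine List.pairwise_cons.2 ⟨fun o ho => ?_, h1⟩
      by_cases hmv : 127 ≤ 127 * m + v
      · have := h5 (127 * m + v - 127) (fun x hx => ?_) (fun c hcc => ?_) o ho
        · omega
        · have h : x ≠ m := Finset.ne_of_mem_erase hx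
          have h' : x ≤ m := E.le_max' x (Finset.mem_of_mem_erase hx)
          omega
        · have := hc c hcc
          omega
      · have hnil : cs = [] := by
          rcases cs with _ | ⟨c, cs⟩
          · rfl
          · have := hc c (by simp)
            omega
        have hem : E.erase m = ∅ := by
          refine Finset.eq_empty_of_forall_notMem fun x hx => ?_
          have h : x ≠ m := Finset.ne_of_mem_erase hx
          have h' : x ≤ m := E.le_max' x (Finset.mem_of_mem_erase hx)
          omega
        have := h5 0 (by simp [hem]) (by simp [hnil]) o ho
        obtain ⟨x, b, h, hb, _⟩ := h2 o ho
        omega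
    · intro o ho
      rcases List.mem_cons.1 ho with rfl | ho
      · exact ⟨m, v, rfl, hv, by omega⟩
      · exact h2 o ho
    · rw [List.sum_cons, h3, ← Finset.add_sum_erase E _ hmE]
      ring
    · have e1 : (127 * m + v - 1) % 127 + 1 = v := by omega
      have e2 : (127 * m + v) / 127 = m := by omega
      simp only [deinterleave, h4, e1, e2, if_true, Finset.insert_erase hmE]
    · intro B hB hB' o ho
      rcases List.mem_cons.1 ho with rfl | ho
      · exact hB m hmE
      · refine h5 B (fun x hx => hB x (Finset.mem_of_mem_erase hx)) (fun c hcc => ?_) o ho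
        have := hB' c hcc
        omega
  rcases E.eq_empty_or_nonempty with rfl | hE
  · have hdec : ∀ cs : List ℕ, (∀ c ∈ cs, ∃ x b, c = 127 * x + b ∧ 1 ≤ b ∧ b < v) →
        deinterleave v cs = (∅, cs) := by
      intro cs
      induction cs with
      | nil => intro _; rfl
      | cons c cs ihc =>
        intro h
        obtain ⟨x, b, hx, hb, hbv⟩ := h c (by simp)
        have e1 : (c - 1) % 127 + 1 = b := by omega
        simp only [deinterleave, ihc fun y hy => h y (by simp [hy]), e1]
        rw [if_neg (by omega), if_neg (by omega)]
        simp
    refine ⟨cs, hgap, fun c hc => ?_, by simp, hdec cs hres, fun B _ hB c hc => by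
      simpa using hB c hc⟩
    obtain ⟨x, b, hx, hb, hbv⟩ := hres c hc
    exact ⟨x, b, hx, hb, by omega⟩
  rcases cs with _ | ⟨c, cs⟩
  · exact top hE (by simp)
  have hgap' := List.pairwise_cons.1 hgap
  by_cases hc : c + 127 * E.card ≤ 127 * E.max' hE + v
  · refine top hE fun y hy => ?_
    rcases List.mem_cons.1 hy with rfl | hy
    · exact hc
    · have := hgap'.1 y hy
      omega
  have hlow := card_lowered E
  have hle := Finset.card_erase_le (s := E) (a := 0)
  have hpos := hE.card_pos
  have hk' : E.card + (cs.length + 1) = k := by simpa using hk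
  obtain ⟨os, h1, h2, h3, h4, h5⟩ := ih _ (by omega) (lowered E) cs rfl hgap'.2
    fun y hy => hres y (by simp [hy])
  obtain ⟨x, b, hx, hb, hbv⟩ := hres c (by simp)
  have hmem : ∀ m ∈ lowered E, m + 1 ≤ E.max' hE := by
    intro m hm
    have : m + 1 ∈ (lowered E).image Nat.succ := Finset.mem_image_of_mem _ hm
    rw [image_succ_lowered] at this
    exact E.le_max' _ (Finset.mem_of_mem_erase this)
  by_cases h0 : 0 ∈ E
  · have hcard := Finset.card_erase_add_one h0
    refine ⟨(c + 127 * (lowered E).card + v) :: os, ?_, ?_, ?_, ?_, ?_⟩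
    · refine List.pairwise_cons.2 ⟨fun o ho => ?_, h1⟩
      have hne : 127 ≤ c + 127 * (lowered E).card + v := by
        by_contra hlt
        have hemp : lowered E = ∅ := by
          rw [← Finset.card_eq_zero]
          omega
        have := h5 0 (by simp [hemp]) (fun y hy => by have := hgap'.1 y hy; omega) o ho
        obtain ⟨x, b, h, hb, _⟩ := h2 o ho
        omega
      have := h5 (c + 127 * (lowered E).card + v - 127) (fun m hm => ?_) (fun y hy => ?_) o ho
      · omega
      · have := hmem m hm
        omega
      · have := hgap'.1 y hy
        omega
    · intro o ho
      rcases List.mem_cons.1 ho with rfl | ho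
      · exact ⟨x + (lowered E).card, b + v, by rw [hx]; ring, by omega, by omega⟩
      · exact h2 o ho
    · rw [List.sum_cons, h3, ← Finset.add_sum_erase E _ h0, sum_erase_zero, List.sum_cons]
      ring
    · have e1 : (c + 127 * (lowered E).card + v - 1) % 127 + 1 = b + v := by omega
      have e2 : c + 127 * (lowered E).card + v - v - 127 * (lowered E).card = c := by omega
      simp only [deinterleave, h4, e1, e2]
      rw [if_neg (by omega), if_pos (by omega), image_succ_lowered, Finset.insert_erase h0]
    · intro B hB hB' o ho
      have hcB := hB' c (by simp)
      rcases List.mem_cons.1 ho with rfl | ho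
      · omega
      · refine h5 B (fun m hm => ?_) (fun y hy => ?_) o ho
        · have := hmem m hm
          have := hB _ (E.max'_mem hE)
          omega
        · have := hgap'.1 y hy
          omega
  · have hlE : E.erase 0 = E := Finset.erase_eq_of_notMem h0
    rw [hlE] at hlow
    refine ⟨(c + 127 * (lowered E).card) :: os, ?_, ?_, ?_, ?_, ?_⟩
    · refine List.pairwise_cons.2 ⟨fun o ho => ?_, h1⟩
      have := h5 (c + 127 * (lowered E).card - 127) (fun m hm => ?_) (fun y hy => ?_) o ho
      · omega
      · have := hmem m hm
        omega
      · have := hgap'.1 y hy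
        omega
    · intro o ho
      rcases List.mem_cons.1 ho with rfl | ho
      · exact ⟨x + (lowered E).card, b, by rw [hx]; ring, by omega, by omega⟩
      · exact h2 o ho
    · rw [List.sum_cons, h3, ← hlE, sum_erase_zero, List.sum_cons, hlE]
      ring
    · have e1 : (c + 127 * (lowered E).card - 1) % 127 + 1 = b := by omega
      have e2 : c + 127 * (lowered E).card - 127 * (lowered E).card = c := by omega
      simp only [deinterleave, h4, e1, e2]
      rw [if_neg (by omega), if_neg (by omega), image_succ_lowered, hlE]
    · intro B hB hB' o ho
      have hcB := hB' c (by simp)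
      rcases List.mem_cons.1 ho with rfl | ho
      · omega
      · refine h5 B (fun m hm => ?_) (fun y hy => ?_) o ho
        · have := hmem m hm
          have := hB _ (E.max'_mem hE)
          omega
        · have := hgap'.1 y hy
          omega

/-- Partitions into distinct parts congruent to `2 ^ i` modulo `127` for some `i < k` are encoded by
partitions with gaps at least `127`. -/
theorem exists_gap_list_encoding (k : ℕ) (hk : k ≤ 7) :
    ∃ f : (ℕ → Finset ℕ) → List ℕ,
      (∀ E, (f E).Pairwise (fun x y => y + 127 ≤ x) ∧
        (∀ o ∈ f E, ∃ x b, o = 127 * x + b ∧ 1 ≤ b ∧ b < 2 ^ k) ∧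
        (f E).sum = ∑ i ∈ Finset.range k, ∑ m ∈ E i, (127 * m + 2 ^ i)) ∧
      ∀ E E', f E = f E' → ∀ i < k, E i = E' i := by
  induction k with
  | zero => exact ⟨fun _ => [], by simp, by simp⟩
  | succ k ih =>
    obtain ⟨f, hf, hinj⟩ := ih (by omega)
    have hpow : 2 ^ k ≤ 2 ^ 6 := Nat.pow_le_pow_right (by norm_num) (by omega)
    choose g h1 h2 h3 h4 _ using fun E : ℕ → Finset ℕ =>
      exists_interleaving (v := 2 ^ k) Nat.one_le_two_pow hpow _ (E k) (f E) rfl (hf E).1 (hf E).2.1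
    refine ⟨g, fun E => ⟨h1 E, ?_, ?_⟩, fun E E' h i hi => ?_⟩
    · simpa only [pow_succ'] using h2 E
    · rw [h3, (hf E).2.2, Finset.sum_range_succ]
    · have hdec := (h4 E).symm.trans ((congrArg _ h).trans (h4 E'))
      rw [Prod.mk.injEq] at hdec
      rcases Nat.lt_succ_iff_lt_or_eq.1 hi with hi | rfl
      · exact hinj E E' hdec.2 i hi
      · exact hdec.1

/-- Glaisher's map: each part `t` of multiplicity `c` is replaced by the parts `2 ^ e * t`, where `e`
runs over the binary digits of `c`. -/
def glaisher (B : Multiset ℕ) : Finset ℕ :=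
  B.toFinset.biUnion fun t => (B.count t).bitIndices.toFinset.image fun e => 2 ^ e * t

theorem eq_of_two_pow_mul_odd_eq {e e' t t' : ℕ} (ht : Odd t) (ht' : Odd t')
    (h : 2 ^ e * t = 2 ^ e' * t') : e = e' ∧ t = t' := by
  have key : ∀ {e e' t t' : ℕ}, Odd t → 2 ^ e * t = 2 ^ e' * t' → e' ≤ e := by
    intro e e' t t' ht h
    have h1 : 2 ^ e' ∣ 2 ^ e * t := h ▸ Dvd.intro _ rfl
    have h2 : (2 ^ e').Coprime t := (Nat.coprime_two_left.2 ht).pow_left _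
    exact (Nat.pow_dvd_pow_iff_le_right (by norm_num)).1 (h2.dvd_of_dvd_mul_right h1)
  obtain rfl : e = e' := le_antisymm (key ht' h.symm) (key ht h)
  exact ⟨rfl, Nat.eq_of_mul_eq_mul_left (by positivity) h⟩

theorem two_pow_mul_mem_glaisher {B : Multiset ℕ} (hB : ∀ t ∈ B, Odd t) {e t : ℕ} (ht : Odd t) :
    2 ^ e * t ∈ glaisher B ↔ e ∈ (B.count t).bitIndices := by
  simp only [glaisher, Finset.mem_biUnion, Finset.mem_image, Multiset.mem_toFinset,
    List.mem_toFinset]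
  constructor
  · rintro ⟨t', ht', e', he', h⟩
    obtain ⟨rfl, rfl⟩ := eq_of_two_pow_mul_odd_eq (hB t' ht') ht h
    exact he'
  · intro he
    refine ⟨t, ?_, e, he, rfl⟩
    by_contra hmem
    rw [Multiset.count_eq_zero_of_notMem hmem] at he
    simp at he

theorem exists_of_mem_glaisher {B : Multiset ℕ} {y : ℕ} (hy : y ∈ glaisher B) :
    ∃ e, ∃ t ∈ B, y = 2 ^ e * t := by
  simp only [glaisher, Finset.mem_biUnion, Finset.mem_image, Multiset.mem_toFinset] at hy
  obtain ⟨t, ht, e, _, rfl⟩ := hy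
  exact ⟨e, t, ht, rfl⟩

theorem glaisher_injOn {B B' : Multiset ℕ} (hB : ∀ t ∈ B, Odd t) (hB' : ∀ t ∈ B', Odd t)
    (h : glaisher B = glaisher B') : B = B' := by
  ext t
  by_cases ht : Odd t
  · refine Nat.eq_of_testBit_eq fun e => ?_
    rw [Bool.eq_iff_iff, ← Nat.mem_bitIndices, ← Nat.mem_bitIndices,
      ← two_pow_mul_mem_glaisher hB ht, ← two_pow_mul_mem_glaisher hB' ht, h]
  · rw [Multiset.count_eq_zero_of_notMem fun h => ht (hB t h),
      Multiset.count_eq_zero_of_notMem fun h => ht (hB' t h)]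

theorem sum_glaisher {B : Multiset ℕ} (hB : ∀ t ∈ B, Odd t) : ∑ y ∈ glaisher B, y = B.sum := by
  rw [glaisher, Finset.sum_biUnion, Finset.sum_multiset_count]
  · refine Finset.sum_congr rfl fun t ht => ?_
    have hodd := hB t (Multiset.mem_toFinset.1 ht)
    rw [Finset.sum_image fun e _ e' _ h => (eq_of_two_pow_mul_odd_eq hodd hodd h).1,
      ← Finset.sum_mul, smul_eq_mul, List.sum_toFinset _ Nat.bitIndices_nodup,
      Nat.sum_map_two_pow_bitIndices]
  · intro t ht t' ht' hne
    refine Finset.disjoint_left.2 fun y hy hy' => hne ?_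
    obtain ⟨e, _, rfl⟩ := Finset.mem_image.1 hy
    obtain ⟨e', _, h⟩ := Finset.mem_image.1 hy'
    exact (eq_of_two_pow_mul_odd_eq (hB t (by simpa using ht)) (hB t' (by simpa using ht'))
      h.symm).2

/-- The quotients modulo `127` of the elements of `X` that are congruent to `2 ^ i`. -/
def layer (X : Finset ℕ) (i : ℕ) : Finset ℕ :=
  (X.filter fun y => y % 127 = 2 ^ i).image (· / 127)

theorem mem_layer {X : Finset ℕ} {i m : ℕ} (hi : i < 7) :
    m ∈ layer X i ↔ 127 * m + 2 ^ i ∈ X := by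
  have hpow : 2 ^ i ≤ 2 ^ 6 := Nat.pow_le_pow_right (by norm_num) (by omega)
  have hpos : 0 < 2 ^ i := by positivity
  simp only [layer, Finset.mem_image, Finset.mem_filter]
  constructor
  · rintro ⟨y, ⟨hy, hyi⟩, rfl⟩
    rwa [← hyi, Nat.div_add_mod]
  · intro h
    exact ⟨_, ⟨h, by omega⟩, by omega⟩

theorem sum_layer {X : Finset ℕ} (hX : ∀ y ∈ X, ∃ i < 7, y % 127 = 2 ^ i) :
    ∑ i ∈ Finset.range 7, ∑ m ∈ layer X i, (127 * m + 2 ^ i) = ∑ y ∈ X, y := by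
  have hU : X = (Finset.range 7).biUnion fun i => X.filter fun y => y % 127 = 2 ^ i := by
    ext y
    simp only [Finset.mem_biUnion, Finset.mem_filter, Finset.mem_range]
    constructor
    · intro hy
      obtain ⟨i, hi, h⟩ := hX y hy
      exact ⟨i, hi, hy, h⟩
    · rintro ⟨i, _, hy, _⟩
      exact hy
  conv_rhs => rw [hU]
  rw [Finset.sum_biUnion]
  · refine Finset.sum_congr rfl fun i _ => ?_
    rw [layer, Finset.sum_image]
    · refine Finset.sum_congr rfl fun y hy => ?_
      rw [← (Finset.mem_filter.1 hy).2, Nat.div_add_mod]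
    · intro y hy y' hy' h
      have h1 := (Finset.mem_filter.1 hy).2
      have h2 := (Finset.mem_filter.1 hy').2
      have h3 : y / 127 = y' / 127 := h
      omega
  · intro i _ j _ hij
    refine Finset.disjoint_left.2 fun y hy hy' => hij ?_
    exact Nat.pow_right_injective le_rfl
      ((Finset.mem_filter.1 hy).2.symm.trans (Finset.mem_filter.1 hy').2)

theorem layer_injOn {X X' : Finset ℕ} (hX : ∀ y ∈ X, ∃ i < 7, y % 127 = 2 ^ i)
    (hX' : ∀ y ∈ X', ∃ i < 7, y % 127 = 2 ^ i) (h : ∀ i < 7, layer X i = layer X' i) :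
    X = X' := by
  have key : ∀ {X X' : Finset ℕ}, (∀ y ∈ X, ∃ i < 7, y % 127 = 2 ^ i) →
      (∀ i < 7, layer X i = layer X' i) → X ⊆ X' := by
    intro X X' hX h y hy
    obtain ⟨i, hi, hyi⟩ := hX y hy
    have hy' : 127 * (y / 127) + 2 ^ i = y := by rw [← hyi, Nat.div_add_mod]
    rw [← hy', ← mem_layer hi, ← h i hi, mem_layer hi, hy']
    exact hy
  exact Finset.Subset.antisymm (key hX h) (key hX' fun i hi => (h i hi).symm)

theorem two_pow_mod_127 (k : ℕ) : 2 ^ k % 127 = 2 ^ (k % 7) := by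
  have hlt : 2 ^ (k % 7) ≤ 2 ^ 6 :=
    Nat.pow_le_pow_right (by norm_num) (by have := Nat.mod_lt k (show 0 < 7 by norm_num); omega)
  conv_lhs => rw [← Nat.div_add_mod k 7, pow_add, pow_mul, Nat.mul_mod, Nat.pow_mod]
  norm_num
  omega

/-- The multiset `B` of odd numbers, all congruent to powers of two modulo `127`, is encoded by a
partition of `B.sum` with gaps at least `127`. -/
theorem exists_gap_list_of_odd :
    ∃ f : Multiset ℕ → List ℕ,
      (∀ B : Multiset ℕ, (∀ t ∈ B, Odd t ∧ ∃ i, t % 127 = 2 ^ i % 127) →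
        (f B).Pairwise (fun x y => y + 127 ≤ x) ∧ (∀ o ∈ f B, 1 ≤ o) ∧ (f B).sum = B.sum) ∧
      ∀ B B' : Multiset ℕ, (∀ t ∈ B, Odd t ∧ ∃ i, t % 127 = 2 ^ i % 127) →
        (∀ t ∈ B', Odd t ∧ ∃ i, t % 127 = 2 ^ i % 127) → f B = f B' → B = B' := by
  obtain ⟨f, hf, hinj⟩ := exists_gap_list_encoding 7 le_rfl
  have hres : ∀ B : Multiset ℕ, (∀ t ∈ B, Odd t ∧ ∃ i, t % 127 = 2 ^ i % 127) →
      ∀ y ∈ glaisher B, ∃ i < 7, y % 127 = 2 ^ i := by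
    intro B hB y hy
    obtain ⟨e, t, ht, rfl⟩ := exists_of_mem_glaisher hy
    obtain ⟨i, hi⟩ := (hB t ht).2
    refine ⟨(e + i) % 7, Nat.mod_lt _ (by norm_num), ?_⟩
    rw [Nat.mul_mod, hi, ← Nat.mul_mod, ← pow_add, two_pow_mod_127]
  refine ⟨fun B => f (layer (glaisher B)), fun B hB => ⟨(hf _).1, fun o ho => ?_, ?_⟩,
    fun B B' hB hB' h => ?_⟩
  · obtain ⟨x, b, h, hb, _⟩ := (hf _).2.1 o ho
    omega
  · rw [(hf _).2.2, sum_layer (hres B hB), sum_glaisher fun t ht => (hB t ht).1]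
  · exact glaisher_injOn (fun t ht => (hB t ht).1) (fun t ht => (hB' t ht).1)
      (layer_injOn (hres B hB) (hres B' hB') (hinj _ _ h))

/-- Multiplying all parts by `u` and adding `r` to the first one. -/
def dilate (u r : ℕ) : List ℕ → List ℕ
  | [] => []
  | o :: os => (u * o + r) :: os.map (u * ·)

theorem dilate_map_div {u r : ℕ} (hr : r < u) (os : List ℕ) :
    (dilate u r os).map (· / u) = os := by
  have hu : 0 < u := by omega
  cases os with
  | nil => rfl
  | cons o os =>
    simp [dilate, Nat.mul_add_div hu, Nat.div_eq_of_lt hr, Function.comp_def,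
      Nat.mul_div_cancel_left _ hu]

theorem sum_dilate (u r : ℕ) {os : List ℕ} (h : os ≠ []) :
    (dilate u r os).sum = u * os.sum + r := by
  cases os with
  | nil => exact absurd rfl h
  | cons o os =>
    have hmap : (os.map (u * ·)).sum = u * os.sum := by
      simpa using List.sum_map_mul_left os id u
    rw [dilate, List.sum_cons, List.sum_cons, hmap]
    ring

theorem le_of_mem_dilate {u r : ℕ} {os : List ℕ} (hos : ∀ o ∈ os, 1 ≤ o) :
    ∀ x ∈ dilate u r os, u ≤ x := by
  cases os with
  | nil => simp [dilate]
  | cons o os =>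
    intro x hx
    rcases List.mem_cons.1 hx with rfl | hx
    · have := Nat.le_mul_of_pos_right u (hos o (by simp))
      omega
    · obtain ⟨y, hy, rfl⟩ := List.mem_map.1 hx
      exact Nat.le_mul_of_pos_right u (hos y (by simp [hy]))

theorem pairwise_dilate {u r d : ℕ} (hd : d ≤ 127 * u) {os : List ℕ}
    (hos : os.Pairwise (fun x y => y + 127 ≤ x)) :
    (dilate u r os).Pairwise (fun x y => y + d ≤ x) := by
  have key : ∀ x y, y + 127 ≤ x → u * y + d ≤ u * x := fun x y h => by
    have := Nat.mul_le_mul_left u h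
    rw [Nat.mul_add] at this
    omega
  cases os with
  | nil => simp [dilate]
  | cons o os =>
    rw [List.pairwise_cons] at hos
    refine List.pairwise_cons.2 ⟨fun x hx => ?_, List.pairwise_map.2 (hos.2.imp fun h => key _ _ h)⟩
    obtain ⟨y, hy, rfl⟩ := List.mem_map.1 hx
    have := key _ _ (hos.1 y hy)
    omega

theorem sort_coe_of_pairwise_gap {d : ℕ} {l : List ℕ} (hl : l.Pairwise (fun x y => y + d ≤ x)) :
    (l : Multiset ℕ).sort (· ≤ ·) = l.reverse := by
  have h1 : ((l : Multiset ℕ).sort (· ≤ ·)).Perm l.reverse := by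
    rw [← Multiset.coe_eq_coe, Multiset.sort_eq, Multiset.coe_reverse]
  refine h1.eq_of_pairwise' (Multiset.pairwise_sort _ _) ?_
  exact List.pairwise_reverse.2 (hl.imp fun h => by omega)

/-- Injections into lists with large gaps bound `gapCount` from below. -/
theorem natCard_le_gapCount {d a n : ℕ} (ha : 1 ≤ a) {α : Type*} (f : α → List ℕ)
    (hf : Function.Injective f) (hgap : ∀ x, (f x).Pairwise (fun x y => y + d ≤ x))
    (hle : ∀ x, ∀ y ∈ f x, a ≤ y) (hsum : ∀ x, (f x).sum = n) :
    Nat.card α ≤ gapCount d a n := by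
  refine Nat.card_le_card_of_injective
    (fun x => ⟨⟨(f x : Multiset ℕ), fun {i} hi => ha.trans (hle x i (by simpa using hi)),
      by simpa using hsum x⟩, ⟨fun y hy => hle x y (by simpa using hy), ?_⟩⟩) ?_
  · change List.IsChain _ _
    rw [sort_coe_of_pairwise_gap (hgap x)]
    exact (List.pairwise_reverse.2 (hgap x)).isChain
  · intro x y h
    have h1 : (f x : Multiset ℕ) = (f y : Multiset ℕ) :=
      congrArg (fun p => Nat.Partition.parts p.1) h
    have h2 := congrArg (fun s => Multiset.sort s (· ≤ ·)) h1
    simp only [sort_coe_of_pairwise_gap (hgap _)] at h2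
    exact hf (List.reverse_injective h2)

/-- The odd number assigned to the part `x`; it is congruent to a power of two modulo `127`. -/
def oddLabel (w x : ℕ) : ℕ :=
  127 * (2 * ((2 * x / w - 3) / 6) + 1) + 2 ^ ((2 * x / w - 3) % 6 + 1)

theorem odd_oddLabel (w x : ℕ) : Odd (oddLabel w x) := by
  rw [oddLabel, pow_succ, Nat.odd_iff]
  omega

theorem oddLabel_mod (w x : ℕ) : ∃ i, oddLabel w x % 127 = 2 ^ i % 127 :=
  ⟨_, Nat.mul_add_mod _ _ _⟩

theorem two_mul_div_eq_of_oddLabel_eq {w x y : ℕ} (hx : 3 ≤ 2 * x / w) (hy : 3 ≤ 2 * y / w)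
    (h : oddLabel w x = oddLabel w y) : 2 * x / w = 2 * y / w := by
  have hpow : ∀ k, 2 ^ (k % 6 + 1) ≤ 2 ^ 6 := fun k =>
    Nat.pow_le_pow_right (by norm_num) (by have := Nat.mod_lt k (show 0 < 6 by norm_num); omega)
  simp only [oddLabel] at h
  have h1 := hpow (2 * x / w - 3)
  have h2 := hpow (2 * y / w - 3)
  have h1' : 0 < 2 ^ ((2 * x / w - 3) % 6 + 1) := by positivity
  have h2' : 0 < 2 ^ ((2 * y / w - 3) % 6 + 1) := by positivity
  have h3 : 2 ^ ((2 * x / w - 3) % 6 + 1) = 2 ^ ((2 * y / w - 3) % 6 + 1) := by omega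
  have h4 := Nat.pow_right_injective le_rfl h3
  omega

theorem mul_oddLabel_le {u w x : ℕ} (hu : 11 ≤ u) (hw : 127 * u ≤ w + 123)
    (hx : 3 ≤ 2 * x / w) : u * oddLabel w x ≤ x := by
  have hmul : 2 * x / w * w ≤ 2 * x := Nat.div_mul_le_self _ _
  rw [oddLabel]
  generalize 2 * x / w = q at *
  obtain ⟨j, e, he, rfl⟩ : ∃ j e, e < 6 ∧ q = 6 * j + e + 3 :=
    ⟨(q - 3) / 6, (q - 3) % 6, Nat.mod_lt _ (by norm_num), by omega⟩
  rw [show (6 * j + e + 3 - 3) / 6 = j by omega, show (6 * j + e + 3 - 3) % 6 = e by omega]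
  have h1 : 11 * j ≤ u * j := Nat.mul_le_mul_right j hu
  have h2 : 127 * u * j ≤ (w + 123) * j := Nat.mul_le_mul_right j hw
  interval_cases e <;> norm_num <;> nlinarith

/-- The parts counted by `congMinusMinusCount` are `k * w + a` with `k ≥ 1` and `k * w - a` with
`k ≥ 2`, where `w = d + 3`; `⌊2 * x / w⌋` tells them apart. -/
theorem cong_part_cases {w a x : ℕ} (ha : 1 ≤ a) (haw : 2 * a < w)
    (hx : x ≡ a [MOD w] ∨ x + a ≡ 0 [MOD w]) (hxa : x ≠ a) (hxw : x ≠ w - a) :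
    (∃ k, 1 ≤ k ∧ x = k * w + a ∧ 2 * x / w = 2 * k) ∨
      ∃ k, 2 ≤ k ∧ x + a = k * w ∧ 2 * x / w + 1 = 2 * k := by
  rcases hx with hx | hx
  · have hmod : x % w = a := by rw [hx, Nat.mod_eq_of_lt (by omega)]
    have hdiv := Nat.div_add_mod' x w
    rw [hmod] at hdiv
    refine Or.inl ⟨x / w, ?_, hdiv.symm, ?_⟩
    · refine Nat.one_le_iff_ne_zero.2 fun h => ?_
      rw [h] at hdiv
      omega
    · generalize x / w = k at hdiv
      subst hdiv
      exact Nat.div_eq_of_lt_le (by nlinarith) (by nlinarith)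
  · obtain ⟨k, hk⟩ := (Nat.modEq_zero_iff_dvd).1 hx
    rw [mul_comm] at hk
    have hk2 : 2 ≤ k := by
      by_contra h
      have : k = 0 ∨ k = 1 := by omega
      rcases this with rfl | rfl <;> omega
    refine Or.inr ⟨k, hk2, hk, ?_⟩
    obtain ⟨j, rfl⟩ : ∃ j, k = j + 1 := ⟨k - 1, by omega⟩
    have : 2 * x / w = 2 * j + 1 := Nat.div_eq_of_lt_le (by nlinarith) (by nlinarith)
    omega

theorem filter_ne_injOn {n s : ℕ} (hs : 0 < s) {p q : n.Partition}
    (h : p.parts.filter (· ≠ s) = q.parts.filter (· ≠ s)) : p = q := by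
  have key : ∀ p : n.Partition, p.parts.filter (· ≠ s) + Multiset.replicate (p.parts.count s) s =
      p.parts := fun p => by
    rw [← Multiset.filter_eq', add_comm]
    exact Multiset.filter_add_not _ _
  have hsum : ∀ p : n.Partition, (p.parts.filter (· ≠ s)).sum + p.parts.count s * s = n :=
    fun p => by
      conv_rhs => rw [← p.parts_sum, ← key p]
      simp
  have hp := hsum p
  have hq := hsum q
  rw [h] at hp
  have hcount : p.parts.count s = q.parts.count s :=
    Nat.eq_of_mul_eq_mul_right hs (by omega)
  ext1
  rw [← key p, ← key q, h, hcount]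

/-- Every multiset of parts larger than `1` is recovered after being padded with ones. -/
theorem add_replicate_one_injective {A A' : Multiset ℕ} {k k' : ℕ} (hA : ∀ x ∈ A, x ≠ 1)
    (hA' : ∀ x ∈ A', x ≠ 1)
    (h : A + Multiset.replicate k 1 = A' + Multiset.replicate k' 1) : A = A' := by
  have key : ∀ {A : Multiset ℕ} {k : ℕ}, (∀ x ∈ A, x ≠ 1) →
      (A + Multiset.replicate k 1).filter (· ≠ 1) = A := fun {A k} hA => by
    rw [Multiset.filter_add, Multiset.filter_eq_self.2 hA, Multiset.filter_eq_nil.2, add_zero]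
    intro x hx
    simpa using Multiset.eq_of_mem_replicate hx
  rw [← key hA, h, key hA']

theorem one_lt_oddLabel (w x : ℕ) : 1 < oddLabel w x :=
  lt_of_lt_of_le (by omega) (Nat.le_add_right _ _)

theorem map_oddLabel_injOn {w : ℕ} {R : Set ℕ} (hR : Set.InjOn (oddLabel w) R)
    {A A' : Multiset ℕ} (hA : ∀ x ∈ A, x ∈ R) (hA' : ∀ x ∈ A', x ∈ R)
    (h : A.map (oddLabel w) = A'.map (oddLabel w)) : A = A' := by
  have key : ∀ {A : Multiset ℕ}, (∀ x ∈ A, x ∈ R) →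
      (A.map (oddLabel w)).map (Function.invFunOn (oddLabel w) R) = A := fun {A} hA => by
    rw [Multiset.map_map]
    conv_rhs => rw [← Multiset.map_id A]
    exact Multiset.map_congr rfl fun x hx => hR.leftInvOn_invFunOn (hA x hx)
  rw [← key hA, h, key hA']

theorem stmt3 (d n a : ℕ) (hd : 1 ≤ d) (hn : 1 ≤ n) (ha : 5 ≤ a)
    (hceil : 2 ^ (a + 3) - 1 ≤ cdiv d a) :
    congMinusMinusCount d a n ≤ gapCount d a n := by
  have hda : 254 * a < d := by
    have h1 : 2 ^ 8 ≤ 2 ^ (a + 3) := Nat.pow_le_pow_right (by norm_num) (by omega)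
    have h2 : 255 ≤ (d + a - 1) / a := le_trans (by omega) hceil
    rw [Nat.le_div_iff_mul_le (by omega)] at h2
    omega
  obtain ⟨u, hu, hu'⟩ : ∃ u, d ≤ 127 * u ∧ 127 * u ≤ d + 126 :=
    ⟨(d + 126) / 127, by omega, by omega⟩
  set w := d + 3 with hw
  obtain ⟨f, hf, hinj⟩ := exists_gap_list_of_odd
  let R : Set ℕ := {x | 3 ≤ 2 * x / w ∧ ((∃ k, x = k * w + a ∧ 2 * x / w = 2 * k) ∨
    ∃ k, x + a = k * w ∧ 2 * x / w + 1 = 2 * k)}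
  have hR : Set.InjOn (oddLabel w) R := by
    intro x hx y hy h
    have hq := two_mul_div_eq_of_oddLabel_eq hx.1 hy.1 h
    rcases hx.2 with ⟨k, hk, hk'⟩ | ⟨k, hk, hk'⟩ <;>
      rcases hy.2 with ⟨l, hl, hl'⟩ | ⟨l, hl, hl'⟩
    · obtain rfl : k = l := by omega
      omega
    · omega
    · omega
    · obtain rfl : k = l := by omega
      omega
  let P := {p : n.Partition // (∀ x ∈ p.parts, x ≡ a [MOD w] ∨ x + a ≡ 0 [MOD w]) ∧
    (∀ x ∈ p.parts, x ≠ a) ∧ ∀ x ∈ p.parts, x ≠ w - a}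
  let A : P → Multiset ℕ := fun p => p.1.parts.filter (· ≠ w + a)
  have hcases : ∀ p : P, ∀ x ∈ p.1.parts, _ := fun p x hx =>
    cong_part_cases (w := w) (a := a) (by omega) (by omega) (p.2.1 x hx) (p.2.2.1 x hx)
      (p.2.2.2 x hx)
  have hAR : ∀ p, ∀ x ∈ A p, x ∈ R := by
    intro p x hx
    obtain ⟨hx, hne⟩ := Multiset.mem_filter.1 hx
    rcases hcases p x hx with ⟨k, hk, h, h'⟩ | ⟨k, hk, h, h'⟩
    · have : k ≠ 1 := by
        rintro rfl
        omega
      exact ⟨by omega, Or.inl ⟨k, h, h'⟩⟩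
    · exact ⟨by omega, Or.inr ⟨k, h, h'⟩⟩
  have hAsum : ∀ p, u * ((A p).map (oddLabel w)).sum ≤ n := by
    intro p
    calc u * ((A p).map (oddLabel w)).sum = ((A p).map fun x => u * oddLabel w x).sum :=
          Multiset.sum_map_mul_left.symm
      _ ≤ ((A p).map id).sum := Multiset.sum_map_le_sum_map _ _ fun x hx =>
          mul_oddLabel_le (by omega) (by omega) (hAR p x hx).1
      _ ≤ p.1.parts.sum := by
          rw [Multiset.map_id]
          obtain ⟨C, hC⟩ := Multiset.le_iff_exists_add.1 (Multiset.filter_le (· ≠ w + a) p.1.parts)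
          conv_rhs => rw [hC, Multiset.sum_add]
          exact Nat.le_add_right _ _
      _ = n := p.1.parts_sum
  have hM : ∀ p, ((A p).map (oddLabel w)).sum ≤ n / u := fun p => by
    rw [Nat.le_div_iff_mul_le (by omega), mul_comm]
    exact hAsum p
  have hun : P → 1 ≤ n / u := fun p => by
    obtain ⟨x, hx⟩ : ∃ x, x ∈ p.1.parts := by
      refine Multiset.exists_mem_of_ne_zero fun h => ?_
      have := p.1.parts_sum
      simp [h] at this
      omega
    have hxn : x ≤ n := p.1.parts_sum ▸ Multiset.le_sum_of_mem hx
    have hwx : w ≤ x + a := by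
      rcases hcases p x hx with ⟨k, hk, h, -⟩ | ⟨k, hk, h, -⟩
      · have := Nat.mul_le_mul_right w hk
        omega
      · have := Nat.mul_le_mul_right w hk
        omega
    rw [Nat.le_div_iff_mul_le (by omega)]
    omega
  let B : P → Multiset ℕ := fun p => (A p).map (oddLabel w) +
    Multiset.replicate (n / u - ((A p).map (oddLabel w)).sum) 1
  have hB : ∀ p, ∀ t ∈ B p, Odd t ∧ ∃ i, t % 127 = 2 ^ i % 127 := by
    intro p t ht
    rcases Multiset.mem_add.1 ht with ht | ht
    · obtain ⟨x, -, rfl⟩ := Multiset.mem_map.1 ht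
      exact ⟨odd_oddLabel w x, oddLabel_mod w x⟩
    · rw [Multiset.eq_of_mem_replicate ht]
      exact ⟨odd_one, 0, rfl⟩
  have hBsum : ∀ p, (B p).sum = n / u := fun p => by
    have := hM p
    simp only [B, Multiset.sum_add, Multiset.sum_replicate, smul_eq_mul, mul_one]
    omega
  have hne1 : ∀ p, ∀ x ∈ (A p).map (oddLabel w), x ≠ 1 := by
    intro p x hx
    obtain ⟨y, -, rfl⟩ := Multiset.mem_map.1 hx
    exact (one_lt_oddLabel w y).ne'
  have hr : n % u < u := Nat.mod_lt _ (by omega)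
  refine natCard_le_gapCount (α := P) (by omega) (fun p => dilate u (n % u) (f (B p))) ?_ ?_ ?_ ?_
  · intro p q h
    have h1 := congrArg (List.map (· / u)) h
    simp only [dilate_map_div hr] at h1
    have h2 := add_replicate_one_injective (hne1 p) (hne1 q) (hinj _ _ (hB p) (hB q) h1)
    exact Subtype.ext (filter_ne_injOn (by omega) (map_oddLabel_injOn hR (hAR p) (hAR q) h2))
  · exact fun p => pairwise_dilate hu (hf _ (hB p)).1
  · exact fun p x hx => le_trans (by omega) (le_of_mem_dilate (hf _ (hB p)).2.1 x hx)
  · intro p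
    have hs : (f (B p)).sum = n / u := (hf _ (hB p)).2.2.trans (hBsum p)
    rw [sum_dilate, hs, Nat.div_add_mod]
    intro h
    have := hun p
    rw [h, List.sum_nil] at hs
    omega
end
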